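/- arXiv:2108.13569 — 2 statements merged into one kernel-verified Lean document; each statement's English description precedes it below -/
import Mathlib

section
/- Let P₁,…,Pₘ be a strongly separated family of full-dimensional polytopes in ℝ^d with 1 ≤ m ≤ d. Then the set 𝒯 = {(u,α) ∈ S^{d−1} × ℝ : for every i, H_{u,α} ∩ Pᵢ ≠ ∅ and Pᵢ ⊆ {x : ⟨u,x⟩ ≥ α}} of oriented hyperplanes tangent to every member of the family and containing the family in their nonnegative side is homeomorphic to the sphere S^{d−m}. -/
/-!
The hyperplane `(u, α)` is tangent to `P` and has `P` on its nonnegative side exactly when the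
minimum over the vertices `x` of `P` of the functionals `(u, α) ↦ ⟪u, x⟫ - α` vanishes. So the
tangent hyperplanes of the family form the link of the zero set of a map `h` whose components are
concave support functions. Strong separation says that any choice of points of the `P i` gives
linearly independent functionals.

For such independent families, `h` is, up to a positively homogeneous bi-Lipschitz change of
coordinates, a linear surjection, so the link is a sphere. To see this, choose a vertex functional
`p i` in each member and move `h` to the linear map `p` along `p + s (h - p)`, which at every `s`
comes from an independent family again. A small Lipschitz change of `h` does not affect its
equivalence class: the change is cut into pieces supported in thin cones, and on a thin cone around
`y` the map `h` only sees the faces at `y`, which agree along a subspace enlarged by `y`, so that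
`h` is already trivialized there by induction and the piece is absorbed by the contraction mapping
principle.
-/

open scoped InnerProductSpace

/-- A family of sets in `ℝ^d` is strongly separated if every subset of indices can be
strictly separated from its complement by an affine hyperplane. -/
def StronglySeparated {d m : ℕ} (S : Fin m → Set (EuclideanSpace ℝ (Fin d))) : Prop :=
  ∀ I : Finset (Fin m), ∃ (u : EuclideanSpace ℝ (Fin d)) (α : ℝ), u ≠ 0 ∧
    (∀ i ∈ I, ∀ x ∈ S i, ⟪u, x⟫_ℝ < α) ∧ (∀ i, i ∉ I → ∀ x ∈ S i, α < ⟪u, x⟫_ℝ)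

namespace CommonTangents

open Filter Topology
open scoped NNReal

/-! ### Conic maps -/

section Conic

variable {E X Y : Type*} [AddCommGroup E] [Module ℝ E] [AddCommGroup X] [Module ℝ X]
  [AddCommGroup Y] [Module ℝ Y] {U : Submodule ℝ E} {f g : E → X}

/-- Positive homogeneity of degree one. The scalar `0` is excluded, but `f 0 = 0` follows. -/
def PosHomogeneous (f : E → X) : Prop :=
  ∀ ⦃t : ℝ⦄, 0 < t → ∀ u, f (t • u) = t • f u

theorem PosHomogeneous.map_zero (hf : PosHomogeneous f) : f 0 = 0 := by
  simpa [two_smul] using hf two_pos 0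

theorem PosHomogeneous.add (hf : PosHomogeneous f) (hg : PosHomogeneous g) :
    PosHomogeneous (f + g) := fun t ht u => by
  simp only [Pi.add_apply, hf ht, hg ht, smul_add]

theorem PosHomogeneous.comp_linearMap {f : X → Y} (hf : PosHomogeneous f) (L : E →ₗ[ℝ] X) :
    PosHomogeneous (f ∘ L) := fun t ht u => by
  simp only [Function.comp_apply, map_smul, hf ht]

/-- Positively homogeneous maps that are additive along the subspace `U`: they are determined by
their restriction to any complement of `U` and their (linear) restriction to `U`. -/
structure IsConicAlong (U : Submodule ℝ E) (f : E → X) : Prop where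
  posHomogeneous : PosHomogeneous f
  map_add_of_mem : ∀ u, ∀ v ∈ U, f (u + v) = f u + f v

namespace IsConicAlong

theorem of_linearMap (U : Submodule ℝ E) (L : E →ₗ[ℝ] X) : IsConicAlong U L :=
  ⟨fun _ _ _ => map_smul L _ _, fun _ _ _ => map_add L _ _⟩

theorem mono {U' : Submodule ℝ E} (hf : IsConicAlong U' f) (hU : U ≤ U') : IsConicAlong U f :=
  ⟨hf.posHomogeneous, fun u v hv => hf.map_add_of_mem u v (hU hv)⟩

theorem add (hf : IsConicAlong U f) (hg : IsConicAlong U g) : IsConicAlong U (f + g) :=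
  ⟨hf.posHomogeneous.add hg.posHomogeneous, fun u v hv => by
    simp only [Pi.add_apply, hf.map_add_of_mem u v hv, hg.map_add_of_mem u v hv,
      add_add_add_comm]⟩

theorem linearMap_comp (L : X →ₗ[ℝ] Y) (hf : IsConicAlong U f) : IsConicAlong U (L ∘ f) :=
  ⟨fun t ht u => by simp only [Function.comp_apply, hf.posHomogeneous ht, map_smul],
    fun u v hv => by simp only [Function.comp_apply, hf.map_add_of_mem u v hv, map_add]⟩

theorem sub (hf : IsConicAlong U f) (hg : IsConicAlong U g) : IsConicAlong U (f - g) := by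
  rw [sub_eq_add_neg]
  exact hf.add (hg.linearMap_comp (-LinearMap.id))

theorem pi {ι : Type*} {f : E → ι → ℝ} (hf : ∀ i, IsConicAlong U fun u => f u i) :
    IsConicAlong U f :=
  ⟨fun _ ht u => funext fun i => (hf i).posHomogeneous ht u,
    fun u v hv => funext fun i => (hf i).map_add_of_mem u v hv⟩

theorem comp_of_fixes {F : E → E} {f : E → X} (hf : IsConicAlong U f) (hF : IsConicAlong U F)
    (hFU : ∀ v ∈ U, F v = v) : IsConicAlong U (f ∘ F) :=
  ⟨fun t ht u => by simp only [Function.comp_apply, hF.posHomogeneous ht, hf.posHomogeneous ht],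
    fun u v hv => by
      simp only [Function.comp_apply, hF.map_add_of_mem u v hv, hFU v hv,
        hf.map_add_of_mem _ v hv]⟩

end IsConicAlong

end Conic

section Lipeomorphism

variable {E X Z : Type*} [NormedAddCommGroup E] [NormedSpace ℝ E] [NormedAddCommGroup X]
  [NormedSpace ℝ X] {U : Submodule ℝ E}

/-- Bi-Lipschitz bijections that are positively homogeneous and additive along `U`. -/
structure IsConicLipeomorph (U : Submodule ℝ E) (A : E ≃ X) : Prop where
  isConicAlong : IsConicAlong U A
  exists_lipschitzWith : ∃ K, LipschitzWith K A
  exists_antilipschitzWith : ∃ K, AntilipschitzWith K A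

namespace IsConicLipeomorph

variable {A B : E ≃ X} {F : E ≃ E}

theorem of_continuousLinearEquiv (U : Submodule ℝ E) (e : E ≃L[ℝ] X) :
    IsConicLipeomorph U e.toEquiv :=
  ⟨.of_linearMap U (e : E →ₗ[ℝ] X), ⟨_, e.lipschitz⟩, ⟨_, e.antilipschitz⟩⟩

theorem refl (U : Submodule ℝ E) : IsConicLipeomorph U (Equiv.refl E) :=
  of_continuousLinearEquiv U (.refl ℝ E)

theorem mono {U' : Submodule ℝ E} (hA : IsConicLipeomorph U' A) (hU : U ≤ U') :
    IsConicLipeomorph U A :=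
  ⟨hA.isConicAlong.mono hU, hA.exists_lipschitzWith, hA.exists_antilipschitzWith⟩

theorem continuous (hA : IsConicLipeomorph U A) : Continuous A :=
  let ⟨_, hK⟩ := hA.exists_lipschitzWith
  hK.continuous

theorem continuous_symm (hA : IsConicLipeomorph U A) : Continuous A.symm :=
  let ⟨_, hK⟩ := hA.exists_antilipschitzWith
  (hK.to_rightInverse A.right_inv).continuous

theorem exists_pos_antilipschitzWith (hA : IsConicLipeomorph U A) :
    ∃ K, 0 < K ∧ AntilipschitzWith K A := by
  obtain ⟨K, hK⟩ := hA.exists_antilipschitzWith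
  exact ⟨K + 1, by positivity, fun u v => (hK u v).trans (by gcongr; simp)⟩

theorem posHomogeneous_symm (hA : IsConicLipeomorph U A) : PosHomogeneous A.symm :=
  fun t ht x => by
    rw [Equiv.symm_apply_eq, hA.isConicAlong.posHomogeneous ht, Equiv.apply_symm_apply]

theorem trans_of_fixes (hA : IsConicLipeomorph U A) (hF : IsConicLipeomorph U F)
    (hFU : ∀ v ∈ U, F v = v) : IsConicLipeomorph U (F.trans A) := by
  obtain ⟨K, hK⟩ := hF.exists_lipschitzWith
  obtain ⟨K', hK'⟩ := hF.exists_antilipschitzWith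
  obtain ⟨L, hL⟩ := hA.exists_lipschitzWith
  obtain ⟨L', hL'⟩ := hA.exists_antilipschitzWith
  exact ⟨hA.isConicAlong.comp_of_fixes hF.isConicAlong hFU, ⟨_, hL.comp hK⟩, ⟨_, hL'.comp hK'⟩⟩

theorem trans_symm_of_eqOn (hA : IsConicLipeomorph U A) (hB : IsConicLipeomorph U B)
    (hAB : ∀ v ∈ U, A v = B v) : IsConicLipeomorph U (A.trans B.symm) := by
  obtain ⟨K, hK⟩ := hA.exists_lipschitzWith
  obtain ⟨K', hK'⟩ := hA.exists_antilipschitzWith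
  obtain ⟨L, hL⟩ := hB.exists_lipschitzWith
  obtain ⟨L', hL'⟩ := hB.exists_antilipschitzWith
  refine ⟨⟨fun t ht u => ?_, fun u v hv => ?_⟩, ⟨_, (hL'.to_rightInverse B.right_inv).comp hK⟩,
    ⟨_, AntilipschitzWith.comp (hL.to_rightInverse B.right_inv) hK'⟩⟩
  · simp only [Equiv.trans_apply, hA.isConicAlong.posHomogeneous ht, hB.posHomogeneous_symm ht]
  · simp only [Equiv.trans_apply, hA.isConicAlong.map_add_of_mem u v hv, hAB v hv,
      Equiv.symm_apply_apply]
    rw [Equiv.symm_apply_eq, hB.isConicAlong.map_add_of_mem _ v hv, Equiv.apply_symm_apply]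

theorem symm_of_fixes (hF : IsConicLipeomorph U F) (hFU : ∀ v ∈ U, F v = v) :
    IsConicLipeomorph U F.symm :=
  (refl U).trans_symm_of_eqOn hF fun v hv => (hFU v hv).symm

end IsConicLipeomorph

/-- Two maps on `E` are conically equivalent along `U` if a conic lipeomorphism of `E` that fixes
`U` pointwise carries one to the other. -/
def ConicEquivalent (U : Submodule ℝ E) (h h' : E → Z) : Prop :=
  ∃ F : E ≃ E, IsConicLipeomorph U F ∧ (∀ v ∈ U, F v = v) ∧ ∀ u, h' (F u) = h u

namespace ConicEquivalent

variable {h h' h'' : E → Z}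

theorem refl (U : Submodule ℝ E) (h : E → Z) : ConicEquivalent U h h :=
  ⟨Equiv.refl E, .refl U, fun _ _ => rfl, fun _ => rfl⟩

theorem symm (H : ConicEquivalent U h h') : ConicEquivalent U h' h := by
  obtain ⟨F, hF, hFU, hh⟩ := H
  exact ⟨F.symm, hF.symm_of_fixes hFU, fun v hv => (Equiv.symm_apply_eq F).2 (hFU v hv).symm,
    fun u => by rw [← hh, Equiv.apply_symm_apply]⟩

theorem trans (H : ConicEquivalent U h h') (H' : ConicEquivalent U h' h'') :
    ConicEquivalent U h h'' := by
  obtain ⟨F, hF, hFU, hh⟩ := H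
  obtain ⟨F', hF', hFU', hh'⟩ := H'
  exact ⟨F.trans F', hF'.trans_of_fixes hF hFU,
    fun v hv => by rw [Equiv.trans_apply, hFU v hv, hFU' v hv],
    fun u => by rw [Equiv.trans_apply, hh', hh]⟩

end ConicEquivalent

variable {Y G : Type*} [NormedAddCommGroup Y] [NormedSpace ℝ Y] [NormedAddCommGroup G]
  [NormedSpace ℝ G]

/-- A map `h : E → Y` is conically trivial with fibre `G` if a conic lipeomorphism `E ≃ G × Y`
carries it to the projection onto `Y`. -/
def IsConicallyTrivial (G : Type*) [NormedAddCommGroup G] [NormedSpace ℝ G] (U : Submodule ℝ E)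
    (h : E → Y) : Prop :=
  ∃ A : E ≃ G × Y, IsConicLipeomorph U A ∧ ∀ u, (A u).2 = h u

theorem IsConicallyTrivial.of_conicEquivalent {h h' : E → Y} (hh : IsConicallyTrivial G U h')
    (H : ConicEquivalent U h h') : IsConicallyTrivial G U h := by
  obtain ⟨A, hA, hAh⟩ := hh
  obtain ⟨F, hF, hFU, hF'⟩ := H
  exact ⟨F.trans A, hA.trans_of_fixes hF hFU, fun u => by rw [Equiv.trans_apply, hAh, hF']⟩

end Lipeomorphism

/-! ### Lipschitz perturbations -/

section Perturbation

theorem bijective_add_of_lt_inv {E X : Type*} [MetricSpace E] [NormedAddCommGroup X]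
    [CompleteSpace X] {A : E ≃ X} {η : E → X} {K L : ℝ≥0} (hA : AntilipschitzWith K A)
    (hη : LipschitzWith L η) (hLK : L < K⁻¹) : Function.Bijective fun u => A u + η u := by
  refine ⟨(hA.add_lipschitzWith hη hLK).injective, fun y => ?_⟩
  have hLK' : L * K < 1 := by
    have hK : 0 < K := inv_pos.1 (hLK.trans_le' zero_le)
    exact (NNReal.lt_inv_iff_mul_lt hK.ne').1 hLK
  have hlip : LipschitzWith (L * K) fun x => y - η (A.symm x) := by
    simpa using (LipschitzWith.const y).sub (hη.comp (hA.to_rightInverse A.right_inv))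
  have hcontr : ContractingWith (L * K) fun x => y - η (A.symm x) := ⟨hLK', hlip⟩
  have hfix := hcontr.fixedPoint_isFixedPt.eq
  refine ⟨A.symm (hcontr.fixedPoint _), ?_⟩
  simp only [Equiv.apply_symm_apply]
  exact (sub_eq_iff_eq_add.1 hfix).symm

variable {E X Y G : Type*} [NormedAddCommGroup E] [NormedSpace ℝ E] [NormedAddCommGroup X]
  [NormedSpace ℝ X] [NormedAddCommGroup Y] [NormedSpace ℝ Y] [NormedAddCommGroup G]
  [NormedSpace ℝ G] {U : Submodule ℝ E} {K L : ℝ≥0}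

theorem IsConicLipeomorph.exists_eq_add [CompleteSpace X] {A : E ≃ X} {η : E → X}
    (hA : IsConicLipeomorph U A) (hAK : AntilipschitzWith K A) (hη : LipschitzWith L η)
    (hηU : IsConicAlong U η) (hLK : L < K⁻¹) :
    ∃ B : E ≃ X, IsConicLipeomorph U B ∧ ∀ u, B u = A u + η u := by
  obtain ⟨M, hM⟩ := hA.exists_lipschitzWith
  exact ⟨Equiv.ofBijective _ (bijective_add_of_lt_inv hAK hη hLK),
    ⟨hA.isConicAlong.add hηU, ⟨_, hM.add hη⟩, ⟨_, hAK.add_lipschitzWith hη hLK⟩⟩, fun _ => rfl⟩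

theorem conicEquivalent_add_of_trivial_where_ne [CompleteSpace G] [CompleteSpace Y]
    {A : E ≃ G × Y} {h η θ : E → Y} (hA : IsConicLipeomorph U A) (hAK : AntilipschitzWith K A)
    (hLK : L < K⁻¹) (hη : LipschitzWith L η) (hθ : LipschitzWith L θ) (hηU : IsConicAlong U η)
    (hθU : IsConicAlong U θ) (hηθU : ∀ v ∈ U, η v = θ v)
    (htriv : ∀ u, η u ≠ θ u → (A u).2 = h u) : ConicEquivalent U (h + η) (h + θ) := by
  have exists_perturbation {ζ : E → Y} (hζ : LipschitzWith L ζ) (hζU : IsConicAlong U ζ) :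
      ∃ B : E ≃ G × Y, IsConicLipeomorph U B ∧ ∀ u, B u = A u + (0, ζ u) :=
    hA.exists_eq_add hAK (by simpa using (LipschitzWith.const (0 : G)).prodMk hζ)
      (hζU.linearMap_comp (LinearMap.inr ℝ G Y)) hLK
  obtain ⟨B, hB, hBη⟩ := exists_perturbation hη hηU
  obtain ⟨B', hB', hBθ⟩ := exists_perturbation hθ hθU
  have hfix : ∀ u, η u = θ u → B'.symm (B u) = u := fun u hu => by
    rw [Equiv.symm_apply_eq, hBη, hBθ, hu]
  refine ⟨B.trans B'.symm, hB.trans_symm_of_eqOn hB' fun v hv => ?_,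
    fun v hv => hfix v (hηθU v hv), fun u => ?_⟩
  · rw [hBη, hBθ, hηθU v hv]
  by_cases hu : η u = θ u
  · simp only [Equiv.trans_apply, Pi.add_apply, hfix u hu, hu]
  · set w := B'.symm (B u) with hw
    have hne : η w ≠ θ w := fun hww => hu <| by
      have hwu : w = u := B.injective (B'.symm.injective (hfix w hww))
      rwa [hwu] at hww
    have hsnd : (B' w).2 = (B u).2 := by rw [hw, Equiv.apply_symm_apply]
    rw [hBη, hBθ, Prod.snd_add, Prod.snd_add, htriv w hne, htriv u hu] at hsnd
    exact hsnd

end Perturbation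

/-! ### Fragmentation of small homogeneous maps -/

section Fragmentation

variable {α ι : Type*}

theorem lipschitzWith_pi [PseudoEMetricSpace α] [Fintype ι] {f : α → ι → ℝ}
    {K : ℝ≥0} (hf : ∀ i, LipschitzWith K fun u => f u i) : LipschitzWith K f :=
  fun u v => edist_pi_le_iff.2 fun i => hf i u v

theorem lipschitzWith_const_mul [PseudoEMetricSpace α] {f : α → ℝ} {K : ℝ≥0}
    (hf : LipschitzWith K f) (a : ℝ≥0) : LipschitzWith (a * K) fun u => a * f u := by
  simpa [Function.comp_def] using (lipschitzWith_smul (a : ℝ)).comp hf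

theorem lipschitzWith_finset_sum {β : Type*} [PseudoEMetricSpace α] {f : β → α → ℝ}
    {K : β → ℝ≥0} (hf : ∀ y, LipschitzWith (K y) (f y)) (s : Finset β) :
    LipschitzWith (∑ y ∈ s, K y) fun u => ∑ y ∈ s, f y u := by
  classical
  induction s using Finset.induction_on with
  | empty => simp
  | insert y s hy ih => simpa only [Finset.sum_insert hy] using (hf y).add ih

/-- Componentwise truncation of `g` to the interval `[-b, b]`. -/
def truncate (b : α → ℝ) (g : α → ι → ℝ) (u : α) (i : ι) : ℝ :=
  max (-b u) (min (g u i) (b u))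

theorem truncate_of_eq_zero {b : α → ℝ} {u : α} (hb : b u = 0) (g : α → ι → ℝ) :
    truncate b g u = 0 := by
  funext i
  simp [truncate, hb]

theorem truncate_of_norm_le [Fintype ι] {b : α → ℝ} {g : α → ι → ℝ} {u : α}
    (h : ‖g u‖ ≤ b u) : truncate b g u = g u := by
  funext i
  have hi := abs_le.1 ((norm_le_pi_norm (g u) i).trans h)
  rw [truncate, min_eq_left hi.2, max_eq_right hi.1]

theorem lipschitzWith_truncate [PseudoEMetricSpace α] [Fintype ι] {b : α → ℝ} {g : α → ι → ℝ}
    {K : ℝ≥0} (hb : LipschitzWith K b) (hg : LipschitzWith K g) : LipschitzWith K (truncate b g) :=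
  lipschitzWith_pi fun i => by
    have hgi : LipschitzWith K fun u => g u i := by
      simpa [Function.comp_def] using (LipschitzWith.eval i).comp hg
    simpa [truncate] using hb.neg.max (hgi.min hb)

variable {W : Type*} [NormedAddCommGroup W] [NormedSpace ℝ W]

/-- A positively homogeneous function whose support is the cone `‖u - ‖u‖ • y‖ < r * ‖u‖` around
the ray spanned by the unit vector `y`. -/
noncomputable def coneBump (r : ℝ≥0) (y u : W) : ℝ :=
  max 0 (r * ‖u‖ - ‖u - ‖u‖ • y‖)

theorem coneBump_nonneg (r : ℝ≥0) (y u : W) : 0 ≤ coneBump r y u :=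
  le_max_left _ _

theorem coneBump_pos_iff {r : ℝ≥0} {y u : W} :
    0 < coneBump r y u ↔ ‖u - ‖u‖ • y‖ < r * ‖u‖ := by
  simp [coneBump]

theorem posHomogeneous_coneBump (r : ℝ≥0) (y : W) : PosHomogeneous (coneBump r y) :=
  fun t ht u => by
    have hcone : ‖t • u - (t * ‖u‖) • y‖ = t * ‖u - ‖u‖ • y‖ := by
      rw [mul_smul, ← smul_sub, norm_smul, Real.norm_of_nonneg ht.le]
    simp only [coneBump, norm_smul, Real.norm_of_nonneg ht.le, hcone, smul_eq_mul,
      mul_max_of_nonneg _ _ ht.le, mul_zero, mul_sub, mul_left_comm]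

theorem lipschitzWith_coneBump (r : ℝ≥0) (y : W) :
    LipschitzWith (r + (1 + ‖y‖₊)) (coneBump r y) := by
  have hnorm : LipschitzWith 1 fun u : W => ‖u‖ := lipschitzWith_one_norm
  have hscale : LipschitzWith r fun u : W => r * ‖u‖ := by
    simpa using lipschitzWith_const_mul hnorm r
  have hray : LipschitzWith ‖y‖₊ fun u : W => ‖u‖ • y := by
    simpa [Function.comp_def] using
      (ContinuousLinearMap.toSpanSingleton ℝ y).lipschitz.comp hnorm
  have hdist : LipschitzWith (1 + ‖y‖₊) fun u : W => ‖u - ‖u‖ • y‖ := by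
    simpa [Function.comp_def] using hnorm.comp (LipschitzWith.id.sub hray)
  exact (hscale.sub hdist).const_max 0

theorem exists_finset_mul_norm_le_sum_coneBump [ProperSpace W] {r : W → ℝ≥0}
    (hr : ∀ y, ‖y‖ = 1 → 0 < r y) :
    ∃ t : Finset W, (∀ y ∈ t, ‖y‖ = 1) ∧
      ∃ c : ℝ≥0, 0 < c ∧ ∀ u, c * ‖u‖ ≤ ∑ y ∈ t, coneBump (r y) y u := by
  obtain ⟨t, htS, htcover⟩ := (isCompact_sphere (0 : W) 1).elim_nhds_subcover
    (fun y => Metric.ball y (r y)) fun y hy => Metric.ball_mem_nhds y (hr y (by simpa using hy))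
  have hcont : Continuous fun u : W => ∑ y ∈ t, coneBump (r y) y u :=
    (lipschitzWith_finset_sum (fun y => lipschitzWith_coneBump (r y) y) t).continuous
  have hpos : ∀ u ∈ Metric.sphere (0 : W) 1, 0 < ∑ y ∈ t, coneBump (r y) y u := fun u hu => by
    obtain ⟨y, hy, huy⟩ := Set.mem_iUnion₂.1 (htcover hu)
    have hu1 : ‖u‖ = 1 := by simpa using hu
    refine Finset.sum_pos' (fun y _ => coneBump_nonneg _ _ _) ⟨y, hy, coneBump_pos_iff.2 ?_⟩
    simpa [hu1, dist_eq_norm] using huy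
  obtain ⟨c, hc, hcle⟩ := (isCompact_sphere (0 : W) 1).exists_forall_le' hcont.continuousOn hpos
  refine ⟨t, fun y hy => by simpa using htS y hy, ⟨c, hc.le⟩, hc, fun u => ?_⟩
  rcases eq_or_ne u 0 with rfl | hu
  · simpa using Finset.sum_nonneg fun y _ => coneBump_nonneg (r y) y 0
  have hu' : 0 < ‖u‖ := norm_pos_iff.2 hu
  have hle := hcle (‖u‖⁻¹ • u) (by simp [norm_smul, hu'.ne'])
  simp only [posHomogeneous_coneBump _ _ (inv_pos.2 hu'), smul_eq_mul, ← Finset.mul_sum] at hle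
  rwa [inv_mul_eq_div, le_div_iff₀ hu'] at hle

theorem posHomogeneous_truncate {b : W → ℝ} {g : W → ι → ℝ} (hb : PosHomogeneous b)
    (hg : PosHomogeneous g) : PosHomogeneous (truncate b g) := fun t ht u => funext fun i => by
  simp only [truncate, hb ht, hg ht, Pi.smul_apply, smul_eq_mul, mul_max_of_nonneg _ _ ht.le,
    mul_min_of_nonneg _ _ ht.le, mul_neg]

/-- Successive partial sums of the bumps give truncations that differ in a single cone. -/
theorem rel_truncate_sum_coneBump [Fintype ι] {R : (W → ι → ℝ) → (W → ι → ℝ) → Prop}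
    (hrefl : R 0 0) (htrans : ∀ f g k, R f g → R g k → R f k) {r ε : W → ℝ≥0} (t : Finset W)
    (hlocal : ∀ y ∈ t, ∀ η θ : W → ι → ℝ, PosHomogeneous η → PosHomogeneous θ →
      LipschitzWith (ε y) η → LipschitzWith (ε y) θ →
      (∀ u, η u ≠ θ u → ‖u - ‖u‖ • y‖ < r y * ‖u‖) → R η θ)
    {g : W → ι → ℝ} (hg : PosHomogeneous g) (hgε : ∀ y ∈ t, LipschitzWith (ε y) g) (a : ℝ≥0)
    (ha : ∀ y ∈ t, a * ∑ z ∈ t, (r z + (1 + ‖z‖₊)) ≤ ε y) :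
    R 0 (truncate (fun u => a * ∑ y ∈ t, coneBump (r y) y u) g) := by
  classical
  let b (s : Finset W) (u : W) : ℝ := a * ∑ y ∈ s, coneBump (r y) y u
  have hhom (s : Finset W) : PosHomogeneous (truncate (b s) g) :=
    posHomogeneous_truncate (fun c hc u => by
      simp only [b, posHomogeneous_coneBump _ _ hc, smul_eq_mul, ← Finset.mul_sum,
        mul_left_comm]) hg
  have hlip : ∀ s ⊆ t, ∀ y ∈ t, LipschitzWith (ε y) (truncate (b s) g) := fun s hs y hy =>
    lipschitzWith_truncate ((lipschitzWith_const_mul (lipschitzWith_finset_sum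
      (fun y => lipschitzWith_coneBump (r y) y) s) a).weaken <|
        (mul_le_mul_right (Finset.sum_le_sum_of_subset hs) a).trans (ha y hy)) (hgε y hy)
  suffices ∀ s ⊆ t, R 0 (truncate (b s) g) from this t subset_rfl
  intro s
  induction s using Finset.induction_on with
  | empty =>
    have hzero : truncate (b ∅) g = 0 := funext fun u => truncate_of_eq_zero (by simp [b]) g
    simpa only [hzero] using fun _ => hrefl
  | insert y s hys ih =>
    intro hst
    obtain ⟨hy, hs⟩ := Finset.insert_subset_iff.1 hst
    refine htrans _ _ _ (ih hs)
      (hlocal y hy _ _ (hhom _) (hhom _) (hlip s hs y hy) (hlip _ hst y hy) fun u hu => ?_)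
    contrapose! hu
    have hbump : coneBump (r y) y u = 0 :=
      le_antisymm (not_lt.1 fun h => hu.not_gt (coneBump_pos_iff.1 h)) (coneBump_nonneg _ _ _)
    funext i
    simp only [truncate, b, Finset.sum_insert hys, hbump, zero_add]

theorem exists_pos_forall_lipschitzWith_of_local [ProperSpace W] [Fintype ι]
    {R : (W → ι → ℝ) → (W → ι → ℝ) → Prop} (hrefl : R 0 0)
    (htrans : ∀ f g k, R f g → R g k → R f k)
    (hlocal : ∀ y : W, ‖y‖ = 1 → ∃ r : ℝ≥0, 0 < r ∧ ∃ ε : ℝ≥0, 0 < ε ∧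
      ∀ η θ : W → ι → ℝ, PosHomogeneous η → PosHomogeneous θ → LipschitzWith ε η →
        LipschitzWith ε θ → (∀ u, η u ≠ θ u → ‖u - ‖u‖ • y‖ < r * ‖u‖) → R η θ) :
    ∃ δ : ℝ≥0, 0 < δ ∧ ∀ g : W → ι → ℝ, PosHomogeneous g → LipschitzWith δ g → R 0 g := by
  choose! r hr ε hε hR using hlocal
  obtain ⟨t, ht, c, hc, hcover⟩ := exists_finset_mul_norm_le_sum_coneBump hr
  set K : ℝ≥0 := ∑ y ∈ t, (r y + (1 + ‖y‖₊))
  obtain ⟨δ, hδε, hδ⟩ : ∃ δ : ℝ≥0, (∀ y ∈ t, max δ (δ * c⁻¹ * K) < ε y) ∧ 0 < δ := by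
    have hcont : Continuous fun δ : ℝ≥0 => max δ (δ * c⁻¹ * K) := by fun_prop
    have htendsto : Tendsto (fun δ : ℝ≥0 => max δ (δ * c⁻¹ * K)) (𝓝[>] 0) (𝓝 0) :=
      (hcont.tendsto' 0 0 (by simp)).mono_left nhdsWithin_le_nhds
    have hev := (Finset.eventually_all t).2 fun y hy =>
      htendsto.eventually_lt_const (hε y (ht y hy))
    exact (hev.and self_mem_nhdsWithin).exists
  refine ⟨δ, hδ, fun g hg hgδ => ?_⟩
  have htrunc : truncate (fun u => (δ * c⁻¹ : ℝ≥0) * ∑ y ∈ t, coneBump (r y) y u) g = g :=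
    funext fun u => truncate_of_norm_le <| calc
      ‖g u‖ ≤ δ * ‖u‖ := hgδ.norm_le_mul hg.map_zero u
      _ = (δ * c⁻¹ : ℝ≥0) * (c * ‖u‖) := by
        have hc' : (c : ℝ) ≠ 0 := by exact_mod_cast hc.ne'
        push_cast
        field_simp
      _ ≤ (δ * c⁻¹ : ℝ≥0) * ∑ y ∈ t, coneBump (r y) y u :=
        mul_le_mul_of_nonneg_left (hcover u) (NNReal.coe_nonneg _)
  rw [← htrunc]
  exact rel_truncate_sum_coneBump hrefl htrans t (fun y hy => hR y (ht y hy)) hg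
    (fun y hy => hgδ.weaken ((le_max_left _ _).trans (hδε y hy).le)) _
    fun y hy => (le_max_right _ _).trans (hδε y hy).le

end Fragmentation

/-! ### Stability of local triviality -/

section Stability

theorem PosHomogeneous.exists_cone_eq {W X : Type*} [NormedAddCommGroup W] [NormedSpace ℝ W]
    [AddCommGroup X] [Module ℝ X] {f f' : W → X} {y : W} (hf : PosHomogeneous f)
    (hf' : PosHomogeneous f') (h : f =ᶠ[𝓝 y] f') :
    ∃ r : ℝ≥0, 0 < r ∧ ∀ u, ‖u - ‖u‖ • y‖ < r * ‖u‖ → f u = f' u := by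
  obtain ⟨r, hr, heq⟩ := Metric.eventually_nhds_iff.1 h
  refine ⟨⟨r, hr.le⟩, hr, fun u hu => ?_⟩
  have hu0 : 0 < ‖u‖ := (norm_nonneg u).lt_of_ne fun h0 => by simp [← h0] at hu
  have hdist : dist (‖u‖⁻¹ • u) y < r := calc
    dist (‖u‖⁻¹ • u) y = ‖u‖⁻¹ * ‖u - ‖u‖ • y‖ := by
      rw [dist_eq_norm, ← norm_smul_of_nonneg (inv_nonneg.2 hu0.le), smul_sub,
        inv_smul_smul₀ hu0.ne']
    _ < r := by rwa [inv_mul_eq_div, div_lt_iff₀ hu0]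
  have hray := heq hdist
  rw [hf (inv_pos.2 hu0), hf' (inv_pos.2 hu0)] at hray
  exact smul_right_injective X (inv_pos.2 hu0).ne' hray

variable {E Y G : Type*} [NormedAddCommGroup E] [NormedSpace ℝ E] [NormedAddCommGroup Y]
  [NormedSpace ℝ Y] [NormedAddCommGroup G] [NormedSpace ℝ G] {U W : Submodule ℝ E}

/-- Near each point off `U`, the map `h` agrees with a conically trivial map, which moreover
coincides with `h` on `U`. -/
def IsLocallyConicallyTrivial (G : Type*) [NormedAddCommGroup G] [NormedSpace ℝ G]
    (U : Submodule ℝ E) (h : E → Y) : Prop :=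
  ∀ y ∉ U, ∃ A : E ≃ G × Y, IsConicLipeomorph U A ∧ (∀ᶠ u in 𝓝 y, (A u).2 = h u) ∧
    ∀ v ∈ U, (A v).2 = h v

theorem IsConicAlong.eq_add_sub_projection {X : Type*} [AddCommGroup X] [Module ℝ X] {f : E → X}
    (hf : IsConicAlong U f) (hWU : IsCompl W U) (u : E) :
    f u = f (W.projection U hWU u) + f (u - W.projection U hWU u) := by
  rw [← hf.map_add_of_mem _ _ (Submodule.sub_projection_mem hWU u), add_sub_cancel]

theorem PosHomogeneous.isConicAlong_comp_projectionOnto {X : Type*} [AddCommGroup X]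
    [Module ℝ X] {f : W → X} (hf : PosHomogeneous f) (hWU : IsCompl W U) :
    IsConicAlong U (f ∘ W.projectionOnto U hWU) :=
  ⟨hf.comp_linearMap _, fun u v hv => by
    simp only [Function.comp_apply, map_add, (Submodule.projectionOnto_apply_eq_zero_iff hWU).2 hv,
      add_zero, hf.map_zero]⟩

theorem IsLocallyConicallyTrivial.exists_trivial_on_cone {h : E → Y}
    (hloc : IsLocallyConicallyTrivial G U h) (hh : IsConicAlong U h) (hWU : IsCompl W U) {y : W}
    (hy : y ≠ 0) :
    ∃ r : ℝ≥0, 0 < r ∧ ∃ A : E ≃ G × Y, IsConicLipeomorph U A ∧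
      ∀ u, ‖W.projectionOnto U hWU u - ‖W.projectionOnto U hWU u‖ • y‖ <
        r * ‖W.projectionOnto U hWU u‖ → (A u).2 = h u := by
  have hyU : (y : E) ∉ U := fun hyU => hy <| by
    simpa using Submodule.disjoint_def.1 hWU.disjoint y y.2 hyU
  obtain ⟨A, hA, hAnear, hAU⟩ := hloc y hyU
  have hA₂ : IsConicAlong U fun u => (A u).2 :=
    hA.isConicAlong.linearMap_comp (LinearMap.snd ℝ G Y)
  obtain ⟨r, hr, hcone⟩ := (hA₂.posHomogeneous.comp_linearMap W.subtype).exists_cone_eq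
    (hh.posHomogeneous.comp_linearMap W.subtype)
    (continuous_subtype_val.continuousAt.eventually hAnear)
  refine ⟨r, hr, A, hA, fun u hu => ?_⟩
  have hproj : (A (W.projection U hWU u)).2 = h (W.projection U hWU u) := hcone _ hu
  rw [hh.eq_add_sub_projection hWU, ← hproj, ← hAU _ (Submodule.sub_projection_mem hWU u)]
  exact hA₂.eq_add_sub_projection hWU u

theorem IsLocallyConicallyTrivial.exists_pos_conicEquivalent_add [FiniteDimensional ℝ E]
    [CompleteSpace G] {ι : Type*} [Fintype ι] {h : E → ι → ℝ}
    (hloc : IsLocallyConicallyTrivial G U h) (hh : IsConicAlong U h) :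
    ∃ ε : ℝ≥0, 0 < ε ∧ ∀ g : E → ι → ℝ, LipschitzWith ε g → IsConicAlong U g →
      (∀ v ∈ U, g v = 0) → ConicEquivalent U h (h + g) := by
  obtain ⟨W, hUW⟩ := U.exists_isCompl
  have hWU := hUW.symm
  let π := W.projectionOnto U hWU
  have hπ : LipschitzWith ‖π.toContinuousLinearMap‖₊ π := π.toContinuousLinearMap.lipschitz
  obtain ⟨ε, hε, hR⟩ := exists_pos_forall_lipschitzWith_of_local (W := W)
    (R := fun η θ => ConicEquivalent U (h + η ∘ π) (h + θ ∘ π)) (ConicEquivalent.refl U _)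
    (fun _ _ _ => ConicEquivalent.trans) fun y hy => by
      obtain ⟨r, hr, A, hA, hAcone⟩ := hloc.exists_trivial_on_cone hh hWU
        (norm_ne_zero_iff.1 (hy.trans_ne one_ne_zero))
      obtain ⟨K, hK, hAK⟩ := hA.exists_pos_antilipschitzWith
      obtain ⟨ε, hε, hεK⟩ := exists_pos_mul_lt (inv_pos.2 hK) ‖π.toContinuousLinearMap‖₊
      refine ⟨r, hr, ε, hε, fun η θ hη hθ hηε hθε hηθ => ?_⟩
      refine conicEquivalent_add_of_trivial_where_ne hA hAK ((mul_comm _ _).trans_lt hεK)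
        (hηε.comp hπ) (hθε.comp hπ) (hη.isConicAlong_comp_projectionOnto hWU)
        (hθ.isConicAlong_comp_projectionOnto hWU) (fun v hv => ?_)
        fun u hu => hAcone u (hηθ _ hu)
      simp only [Function.comp_apply, π, (Submodule.projectionOnto_apply_eq_zero_iff hWU).2 hv,
        hη.map_zero, hθ.map_zero]
  refine ⟨ε, hε, fun g hgε hg hgU => ?_⟩
  have hgπ : (g ∘ W.subtype) ∘ π = g := funext fun u => by
    rw [hg.eq_add_sub_projection hWU u, hgU _ (Submodule.sub_projection_mem hWU u), add_zero]
    rfl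
  have hgW : LipschitzWith ε (g ∘ W.subtype) := fun u v => hgε u v
  have hequiv := hR _ (hg.posHomogeneous.comp_linearMap W.subtype) hgW
  rwa [hgπ, Pi.zero_comp, add_zero] at hequiv

theorem conicEquivalent_add_of_forall_isLocallyConicallyTrivial [FiniteDimensional ℝ E]
    [CompleteSpace G] {ι : Type*} [Fintype ι] {h g : E → ι → ℝ} {K : ℝ≥0}
    (hh : IsConicAlong U h) (hg : IsConicAlong U g) (hgK : LipschitzWith K g)
    (hgU : ∀ v ∈ U, g v = 0)
    (hloc : ∀ s ∈ Set.Icc (0 : ℝ) 1, IsLocallyConicallyTrivial G U (h + s • g)) :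
    ConicEquivalent U h (h + g) := by
  have hsmul (s : ℝ) : IsConicAlong U (s • g) := hg.linearMap_comp (LinearMap.lsmul ℝ _ s)
  have hnear : ∀ s ∈ Set.Icc (0 : ℝ) 1,
      ∀ᶠ s' in 𝓝 s, ConicEquivalent U (h + s • g) (h + s' • g) := fun s hs => by
    obtain ⟨ε, hε, hequiv⟩ := (hloc s hs).exists_pos_conicEquivalent_add (hh.add (hsmul s))
    have hcont : Continuous fun s' : ℝ => ‖s' - s‖₊ * K := by fun_prop
    filter_upwards [(hcont.tendsto' s 0 (by simp)).eventually_lt_const hε] with s' hs'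
    have hlip : LipschitzWith ε ((s' - s) • g) :=
      ((lipschitzWith_smul (s' - s)).comp hgK).weaken hs'.le
    have hcomb := hequiv _ hlip (hsmul _) fun v hv => by rw [Pi.smul_apply, hgU v hv, smul_zero]
    rwa [add_assoc, ← add_smul, add_sub_cancel] at hcomb
  have hpath := isPreconnected_Icc.induction₂
    (fun s s' => ConicEquivalent U (h + s • g) (h + s' • g))
    (fun s hs => mem_nhdsWithin_of_mem_nhds (hnear s hs))
    (fun _ _ _ _ _ _ => ConicEquivalent.trans) (fun _ _ _ _ => ConicEquivalent.symm)
    (Set.left_mem_Icc.2 zero_le_one) (Set.right_mem_Icc.2 zero_le_one)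
  simpa only [zero_smul, add_zero, one_smul] using hpath

end Stability

/-! ### Lower support functions -/

section Support

variable {E : Type*} [NormedAddCommGroup E] [NormedSpace ℝ E] {F : Set (E →L[ℝ] ℝ)}

/-- The concave support function `u ↦ min {f u | f ∈ F}` of a finite set of functionals. The
infimum is only meaningful when `F` is nonempty. -/
noncomputable def lowerSupport (F : Set (E →L[ℝ] ℝ)) (u : E) : ℝ :=
  sInf ((fun f : E →L[ℝ] ℝ => f u) '' F)

theorem isLeast_lowerSupport (hF : F.Finite) (hne : F.Nonempty) (u : E) :
    IsLeast ((fun f : E →L[ℝ] ℝ => f u) '' F) (lowerSupport F u) :=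
  (hF.image _).isCompact.isLeast_sInf (hne.image _)

theorem exists_mem_eq_lowerSupport (hF : F.Finite) (hne : F.Nonempty) (u : E) :
    ∃ f ∈ F, f u = lowerSupport F u :=
  (isLeast_lowerSupport hF hne u).1

theorem lowerSupport_le (hF : F.Finite) {f : E →L[ℝ] ℝ} (hf : f ∈ F) (u : E) :
    lowerSupport F u ≤ f u :=
  (isLeast_lowerSupport hF ⟨f, hf⟩ u).2 ⟨f, hf, rfl⟩

theorem lowerSupport_le_of_mem_convexHull (hF : F.Finite) {f : E →L[ℝ] ℝ}
    (hf : f ∈ convexHull ℝ F) (u : E) : lowerSupport F u ≤ f u :=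
  convexHull_min (fun _ hf' => lowerSupport_le hF hf' u)
    (convex_halfSpace_ge (.mk (fun _ _ => rfl) fun _ _ => rfl) (lowerSupport F u)) hf

theorem lowerSupport_eq {u : E} {f : E →L[ℝ] ℝ} (hf : f ∈ F) (hle : ∀ f' ∈ F, f u ≤ f' u) :
    lowerSupport F u = f u :=
  IsLeast.csInf_eq ⟨⟨f, hf, rfl⟩, Set.forall_mem_image.2 hle⟩

theorem isConicAlong_lowerSupport {U : Submodule ℝ E} (hF : F.Finite) (hne : F.Nonempty)
    (hU : ∀ f ∈ F, ∀ f' ∈ F, ∀ v ∈ U, f v = f' v) : IsConicAlong U (lowerSupport F) := by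
  refine ⟨fun t ht u => ?_, fun u v hv => ?_⟩ <;>
    obtain ⟨f, hf, hfu⟩ := exists_mem_eq_lowerSupport hF hne u
  · rw [← hfu, ← map_smul]
    refine lowerSupport_eq hf fun f' hf' => ?_
    simp only [map_smul, smul_eq_mul]
    exact mul_le_mul_of_nonneg_left (hfu.trans_le (lowerSupport_le hF hf' u)) ht.le
  · rw [← hfu, lowerSupport_eq hf fun f' hf' => (hU f hf f' hf' v hv).le, ← map_add]
    refine lowerSupport_eq hf fun f' hf' => ?_
    simp only [map_add]
    exact add_le_add (hfu.trans_le (lowerSupport_le hF hf' u)) (hU f hf f' hf' v hv).le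

theorem exists_lipschitzWith_lowerSupport (hF : F.Finite) (hne : F.Nonempty) :
    ∃ K, LipschitzWith K (lowerSupport F) := by
  obtain ⟨K, hK⟩ := (hF.image fun f : E →L[ℝ] ℝ => ‖f‖₊).bddAbove
  refine ⟨K, LipschitzWith.of_le_add_mul K fun u v => ?_⟩
  obtain ⟨f, hf, hfv⟩ := exists_mem_eq_lowerSupport hF hne v
  have hfK : LipschitzWith K f := f.lipschitz.weaken (hK ⟨f, hf, rfl⟩)
  exact (lowerSupport_le hF hf u).trans (hfv ▸ hfK.le_add_mul u v)

/-- The functionals of `F` that attain the lower support function at `y`. -/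
def face (F : Set (E →L[ℝ] ℝ)) (y : E) : Set (E →L[ℝ] ℝ) :=
  {f ∈ F | f y = lowerSupport F y}

theorem face_subset (F : Set (E →L[ℝ] ℝ)) (y : E) : face F y ⊆ F :=
  Set.sep_subset _ _

theorem eventually_lowerSupport_face_eq (hF : F.Finite) (hne : F.Nonempty) (y : E) :
    ∀ᶠ u in 𝓝 y, lowerSupport (face F y) u = lowerSupport F u := by
  obtain ⟨K, hK⟩ := exists_lipschitzWith_lowerSupport hF hne
  have hstrict : ∀ᶠ u in 𝓝 y, ∀ f ∈ F, f ∉ face F y → lowerSupport F u < f u :=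
    hF.eventually_all.2 fun f hf => by
      by_cases hfy : f ∈ face F y
      · simp [hfy]
      have hlt : lowerSupport F y < f y :=
        (lowerSupport_le hF hf y).lt_of_ne fun heq => hfy ⟨hf, heq.symm⟩
      filter_upwards [hK.continuous.continuousAt.eventually_lt f.continuous.continuousAt hlt]
        with u hu _ using hu
  filter_upwards [hstrict] with u hu
  obtain ⟨f, hf, hfu⟩ := exists_mem_eq_lowerSupport hF hne u
  have hff : f ∈ face F y := by_contra fun hff => (hu f hf hff).ne' hfu
  rw [← hfu]
  exact lowerSupport_eq hff fun f' hf' => hfu.trans_le (lowerSupport_le hF hf'.1 u)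

theorem lowerSupport_image_contract (hF : F.Finite) (hne : F.Nonempty) {s : ℝ} (hs : 0 ≤ s)
    (p : E →L[ℝ] ℝ) (u : E) :
    lowerSupport ((fun f => p + s • (f - p)) '' F) u = p u + s * (lowerSupport F u - p u) := by
  obtain ⟨f, hf, hfu⟩ := exists_mem_eq_lowerSupport hF hne u
  rw [lowerSupport_eq (Set.mem_image_of_mem _ hf) (Set.forall_mem_image.2 fun f' hf' => ?_)]
  · simp [hfu]
  have hle := mul_le_mul_of_nonneg_left (hfu.trans_le (lowerSupport_le hF hf' u)) hs
  simpa [mul_sub] using hle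

end Support

/-! ### Independent families -/

section Independent

variable {E ι : Type*} [NormedAddCommGroup E] [NormedSpace ℝ E] {U : Submodule ℝ E}
  {F : ι → Set (E →L[ℝ] ℝ)}

/-- Finite nonempty sets of functionals, indexed by `ι`, such that each set restricts to a single
functional on `U` and all transversals of the convex hulls are linearly independent. -/
structure IsIndependentAlong (U : Submodule ℝ E) (F : ι → Set (E →L[ℝ] ℝ)) : Prop where
  finite : ∀ i, (F i).Finite
  nonempty : ∀ i, (F i).Nonempty
  eq_of_mem : ∀ i, ∀ f ∈ F i, ∀ f' ∈ F i, ∀ v ∈ U, f v = f' v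
  linearIndependent : ∀ p : ι → E →L[ℝ] ℝ, (∀ i, p i ∈ convexHull ℝ (F i)) →
    LinearIndependent ℝ p

/-- The map whose components are the lower support functions of the members of a family. -/
noncomputable def supportMap (F : ι → Set (E →L[ℝ] ℝ)) (u : E) (i : ι) : ℝ :=
  lowerSupport (F i) u

namespace IsIndependentAlong

theorem isConicAlong_supportMap (hF : IsIndependentAlong U F) : IsConicAlong U (supportMap F) :=
  .pi fun i => isConicAlong_lowerSupport (hF.finite i) (hF.nonempty i) (hF.eq_of_mem i)

theorem supportMap_eq_of_mem (hF : IsIndependentAlong U F) {v : E} (hv : v ∈ U)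
    {p : ι → E →L[ℝ] ℝ} (hp : ∀ i, p i ∈ F i) : supportMap F v = fun i => p i v :=
  funext fun i => lowerSupport_eq (hp i) fun f' hf' => (hF.eq_of_mem i _ (hp i) f' hf' v hv).le

theorem exists_lipschitzWith_supportMap [Fintype ι] (hF : IsIndependentAlong U F) :
    ∃ K, LipschitzWith K (supportMap F) := by
  choose K hK using fun i => exists_lipschitzWith_lowerSupport (hF.finite i) (hF.nonempty i)
  exact ⟨∑ i, K i, lipschitzWith_pi fun i =>
    (hK i).weaken (Finset.single_le_sum (fun _ _ => zero_le) (Finset.mem_univ i))⟩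

theorem face (hF : IsIndependentAlong U F) (y : E) :
    IsIndependentAlong (U ⊔ Submodule.span ℝ {y}) fun i => face (F i) y where
  finite i := (hF.finite i).subset (face_subset _ _)
  nonempty i := exists_mem_eq_lowerSupport (hF.finite i) (hF.nonempty i) y
  eq_of_mem i f hf f' hf' v hv := by
    obtain ⟨w, hw, z, hz, rfl⟩ := Submodule.mem_sup.1 hv
    obtain ⟨c, rfl⟩ := Submodule.mem_span_singleton.1 hz
    simp only [map_add, map_smul, hF.eq_of_mem i f hf.1 f' hf'.1 w hw, hf.2, hf'.2]
  linearIndependent p hp :=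
    hF.linearIndependent p fun i => convexHull_mono (face_subset _ _) (hp i)

theorem contract (hF : IsIndependentAlong U F) {p : ι → E →L[ℝ] ℝ} (hp : ∀ i, p i ∈ F i) {s : ℝ}
    (hs : s ∈ Set.Icc (0 : ℝ) 1) :
    IsIndependentAlong U fun i => (fun f => p i + s • (f - p i)) '' F i where
  finite i := (hF.finite i).image _
  nonempty i := (hF.nonempty i).image _
  eq_of_mem i := by
    rintro _ ⟨f, hf, rfl⟩ _ ⟨f', hf', rfl⟩ v hv
    simp [hF.eq_of_mem i f hf f' hf' v hv]
  linearIndependent q hq := hF.linearIndependent q fun i => by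
    refine convexHull_min (Set.image_subset_iff.2 fun f hf => ?_) (convex_convexHull ℝ _) (hq i)
    exact (convex_convexHull ℝ (F i)).add_smul_sub_mem (subset_convexHull ℝ _ (hp i))
      (subset_convexHull ℝ _ hf) hs

theorem isLocallyConicallyTrivial {G : Type*} [NormedAddCommGroup G] [NormedSpace ℝ G]
    [Fintype ι] (hF : IsIndependentAlong U F)
    (hface : ∀ y ∉ U, IsConicallyTrivial G (U ⊔ Submodule.span ℝ {y})
      (supportMap fun i => CommonTangents.face (F i) y)) :
    IsLocallyConicallyTrivial G U (supportMap F) := fun y hy => by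
  obtain ⟨A, hA, hAh⟩ := hface y hy
  refine ⟨A, hA.mono le_sup_left, ?_, fun v hv => ?_⟩
  · have hev := eventually_all.2 fun i =>
      eventually_lowerSupport_face_eq (hF.finite i) (hF.nonempty i) y
    filter_upwards [hev] with u hu
    exact (hAh u).trans (funext hu)
  · choose p hp using (hF.face y).nonempty
    rw [hAh, (hF.face y).supportMap_eq_of_mem (Submodule.mem_sup_left hv) hp,
      hF.supportMap_eq_of_mem hv fun i => (hp i).1]

end IsIndependentAlong

theorem isConicallyTrivial_of_range_eq_top {G Y : Type*} [NormedAddCommGroup G]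
    [NormedSpace ℝ G] [NormedAddCommGroup Y] [NormedSpace ℝ Y] [FiniteDimensional ℝ E]
    [FiniteDimensional ℝ G] [FiniteDimensional ℝ Y]
    (hdim : Module.finrank ℝ E = Module.finrank ℝ G + Module.finrank ℝ Y) (U : Submodule ℝ E)
    {L : E →L[ℝ] Y} (hL : L.range = ⊤) : IsConicallyTrivial G U L := by
  have := FiniteDimensional.complete ℝ E
  have := FiniteDimensional.complete ℝ G
  have := FiniteDimensional.complete ℝ Y
  have hker : Module.finrank ℝ L.ker = Module.finrank ℝ G := by
    have hrank := LinearMap.finrank_range_add_finrank_ker (L : E →ₗ[ℝ] Y)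
    rw [hL, finrank_top] at hrank
    omega
  let e : L.ker ≃ₗ[ℝ] G := .ofFinrankEq _ _ hker
  obtain ⟨W, hW⟩ := L.ker.exists_isCompl
  let q : E →L[ℝ] G := (e.toLinearMap ∘ₗ L.ker.projectionOnto W hW).toContinuousLinearMap
  have hq : q.range = ⊤ :=
    LinearMap.range_eq_top.2 (e.surjective.comp (Submodule.projectionOnto_surjective hW))
  have hqker : q.ker = W :=
    (LinearEquiv.ker_comp e _).trans (Submodule.ker_projectionOnto hW)
  exact ⟨(q.equivProdOfSurjectiveOfIsCompl L hq hL (hqker ▸ hW.symm)).toEquiv,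
    .of_continuousLinearEquiv U _, fun _ => rfl⟩

theorem range_pi_eq_top_of_linearIndependent [Finite ι] {p : ι → E →L[ℝ] ℝ}
    (hp : LinearIndependent ℝ p) : (ContinuousLinearMap.pi p).range = ⊤ := by
  have hcoe : LinearIndependent ℝ fun i => (p i : E → ℝ) :=
    hp.map' (LinearMap.ltoFun ℝ E ℝ ℝ ∘ₗ ContinuousLinearMap.coeLM ℝ)
      (LinearMap.ker_eq_bot.2 DFunLike.coe_injective)
  rw [← Submodule.span_eq (ContinuousLinearMap.pi p).range,
    ← span_flip_eq_top_iff_linearIndependent.2 hcoe]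
  rfl

/-- Away from `U` the family degenerates to its faces, which are independent along a larger
subspace; this drives the induction. -/
theorem IsIndependentAlong.isConicallyTrivial {G : Type*} [NormedAddCommGroup G]
    [NormedSpace ℝ G] [FiniteDimensional ℝ E] [FiniteDimensional ℝ G] [Fintype ι]
    (hdim : Module.finrank ℝ E = Module.finrank ℝ G + Fintype.card ι)
    (hF : IsIndependentAlong U F) : IsConicallyTrivial G U (supportMap F) := by
  induction U using WellFoundedGT.induction generalizing F with
  | ind U ih =>
  have := FiniteDimensional.complete ℝ G
  have hloc {F : ι → Set (E →L[ℝ] ℝ)} (hF : IsIndependentAlong U F) :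
      IsLocallyConicallyTrivial G U (supportMap F) :=
    hF.isLocallyConicallyTrivial fun y hy => ih _ (by simpa using hy) (hF.face y)
  choose p hp using hF.nonempty
  let L : E →L[ℝ] ι → ℝ := ContinuousLinearMap.pi p
  have hL : IsConicAlong U L := .of_linearMap U (L : E →ₗ[ℝ] ι → ℝ)
  obtain ⟨K, hK⟩ := hF.exists_lipschitzWith_supportMap
  have hhomotopy : ConicEquivalent U L (L + (supportMap F - L)) := by
    refine conicEquivalent_add_of_forall_isLocallyConicallyTrivial (G := G) hL
      (hF.isConicAlong_supportMap.sub hL) (hK.sub L.lipschitz)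
      (fun v hv => sub_eq_zero.2 (hF.supportMap_eq_of_mem hv hp)) fun s hs => ?_
    have hcontract : L + s • (supportMap F - L) =
        supportMap fun i => (fun f => p i + s • (f - p i)) '' F i := funext₂ fun u i =>
      (lowerSupport_image_contract (hF.finite i) (hF.nonempty i) hs.1 (p i) u).symm
    exact hcontract ▸ hloc (hF.contract hp hs)
  have hlinear : IsConicallyTrivial G U L := isConicallyTrivial_of_range_eq_top
    (by rwa [Module.finrank_fintype_fun_eq_card]) U
    (range_pi_eq_top_of_linearIndependent (hF.linearIndependent p fun i =>
      subset_convexHull ℝ _ (hp i)))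
  rw [add_sub_cancel] at hhomotopy
  exact hlinear.of_conicEquivalent hhomotopy.symm

end Independent

/-! ### Links of conically trivial maps -/

section Link

theorem nonempty_homeomorph_of_posHomogeneous {G : Type*} [NormedAddCommGroup G]
    [NormedSpace ℝ G] {M N : G → ℝ} (hM : Continuous M) (hN : Continuous N)
    (hMhom : PosHomogeneous M) (hNhom : PosHomogeneous N) (hMpos : ∀ x, x ≠ 0 → 0 < M x)
    (hNpos : ∀ x, x ≠ 0 → 0 < N x) : Nonempty ({x // M x = 1} ≃ₜ {x // N x = 1}) := by
  have pos_of_eq_one {f f' : G → ℝ} (hf : PosHomogeneous f) (hf' : ∀ x, x ≠ 0 → 0 < f' x)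
      (x : {x // f x = 1}) : 0 < f' x :=
    hf' x fun h0 => by simpa [h0, hf.map_zero] using x.2
  have hNM := pos_of_eq_one hMhom hNpos
  have hMN := pos_of_eq_one hNhom hMpos
  exact ⟨{
    toFun x := ⟨(N x)⁻¹ • x, by
      rw [hNhom (inv_pos.2 (hNM x)), smul_eq_mul, inv_mul_cancel₀ (hNM x).ne']⟩
    invFun x := ⟨(M x)⁻¹ • x, by
      rw [hMhom (inv_pos.2 (hMN x)), smul_eq_mul, inv_mul_cancel₀ (hMN x).ne']⟩
    left_inv x := Subtype.ext <| by
      simp [hMhom (inv_pos.2 (hNM x)), x.2, smul_smul, (hNM x).ne']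
    right_inv x := Subtype.ext <| by
      simp [hNhom (inv_pos.2 (hMN x)), x.2, smul_smul, (hMN x).ne']
    continuous_toFun :=
      have hinv : Continuous fun x : {x // M x = 1} => (N x)⁻¹ :=
        (hN.comp continuous_subtype_val).inv₀ fun x => (hNM x).ne'
      continuous_induced_rng.2 (hinv.smul continuous_subtype_val)
    continuous_invFun :=
      have hinv : Continuous fun x : {x // N x = 1} => (M x)⁻¹ :=
        (hM.comp continuous_subtype_val).inv₀ fun x => (hMN x).ne'
      continuous_induced_rng.2 (hinv.smul continuous_subtype_val) }⟩

variable {E G Y : Type*} [NormedAddCommGroup E] [NormedSpace ℝ E] [NormedAddCommGroup G]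
  [NormedSpace ℝ G] [NormedAddCommGroup Y] [NormedSpace ℝ Y] {U : Submodule ℝ E} {h : E → Y}

theorem IsConicallyTrivial.nonempty_homeomorph_sphere (hh : IsConicallyTrivial G U h) {M : E → ℝ}
    (hM : Continuous M) (hMhom : PosHomogeneous M) (hMpos : ∀ u, h u = 0 → u ≠ 0 → 0 < M u) :
    Nonempty ({u // M u = 1 ∧ h u = 0} ≃ₜ Metric.sphere (0 : G) 1) := by
  obtain ⟨A, hA, hAh⟩ := hh
  let N (w : G) : ℝ := M (A.symm (w, 0))
  have hh0 (w : G) : h (A.symm (w, 0)) = 0 := by rw [← hAh, Equiv.apply_symm_apply]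
  have hN : Continuous N := by
    have := hA.continuous_symm
    fun_prop
  have hNhom : PosHomogeneous N := fun t ht w => by
    rw [← hMhom ht, ← hA.posHomogeneous_symm ht, Prod.smul_mk, smul_zero]
  have hNpos : ∀ w, w ≠ 0 → 0 < N w := fun w hw => hMpos _ (hh0 w) fun h0 => hw <| by
    rw [Equiv.symm_apply_eq, hA.isConicAlong.posHomogeneous.map_zero] at h0
    exact congrArg Prod.fst h0
  have hsymm {u : E} (hu : h u = 0) : A.symm ((A u).1, 0) = u := by
    rw [← hu, ← hAh, Prod.mk.eta, Equiv.symm_apply_apply]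
  let e : {u // M u = 1 ∧ h u = 0} ≃ₜ {w // N w = 1} :=
    { toFun u := ⟨(A u).1, (congrArg M (hsymm u.2.2)).trans u.2.1⟩
      invFun w := ⟨A.symm (w, 0), w.2, hh0 w⟩
      left_inv u := Subtype.ext (hsymm u.2.2)
      right_inv w := Subtype.ext (by simp)
      continuous_toFun :=
        .subtype_mk (continuous_fst.comp (hA.continuous.comp continuous_subtype_val)) _
      continuous_invFun :=
        .subtype_mk (hA.continuous_symm.comp (continuous_subtype_val.prodMk continuous_const)) _ }
  obtain ⟨e'⟩ := nonempty_homeomorph_of_posHomogeneous hN continuous_norm hNhom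
    (fun t ht w => by rw [norm_smul_of_nonneg ht.le, smul_eq_mul]) hNpos
    fun w hw => norm_pos_iff.2 hw
  exact ⟨(e.trans e').trans ((Homeomorph.refl G).subtype fun _ => mem_sphere_zero_iff_norm.symm)⟩

end Link

/-! ### Tangent hyperplanes -/

section Tangent

variable {W : Type*} [NormedAddCommGroup W] [InnerProductSpace ℝ W]

/-- The functional `(u, α) ↦ ⟪u, x⟫ - α`, whose sign tells on which side of the hyperplane
`⟪u, ·⟫ = α` the point `x` lies, as an affine function of `x`. -/
noncomputable def sideFunctional : W →ᵃ[ℝ] W × ℝ →L[ℝ] ℝ where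
  toFun x := innerSL ℝ x ∘L .fst ℝ W ℝ - .snd ℝ W ℝ
  linear :=
    { toFun x := innerSL ℝ x ∘L .fst ℝ W ℝ
      map_add' x y := by ext <;> simp
      map_smul' c x := by ext <;> simp }
  map_vadd' x v := by ext <;> simp

theorem sideFunctional_apply (x : W) (p : W × ℝ) : sideFunctional x p = ⟪p.1, x⟫_ℝ - p.2 := by
  simp [sideFunctional, real_inner_comm]

/-- Pairing a vanishing combination `∑ cᵢ pᵢ` with a vector at which `pᵢ < 0` exactly when `cᵢ > 0`
makes every term nonpositive, hence zero. -/
theorem linearIndependent_of_forall_exists_sign {E ι : Type*} [NormedAddCommGroup E]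
    [NormedSpace ℝ E] [Finite ι] {p : ι → E →L[ℝ] ℝ}
    (hp : ∀ I : Finset ι, ∃ u, (∀ i ∈ I, p i u < 0) ∧ ∀ i ∉ I, 0 < p i u) :
    LinearIndependent ℝ p := by
  have := Fintype.ofFinite ι
  rw [Fintype.linearIndependent_iff]
  intro c hc
  obtain ⟨u, hneg, hpos⟩ := hp {i | 0 < c i}
  simp only [Finset.mem_filter_univ, not_lt] at hneg hpos
  have hsum : ∑ i, c i * p i u = 0 := by simpa using congrArg (fun f : E →L[ℝ] ℝ => f u) hc
  have hterm : ∀ i, c i * p i u ≤ 0 := fun i => (lt_or_ge 0 (c i)).elim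
    (fun hi => mul_nonpos_of_nonneg_of_nonpos hi.le (hneg i hi).le)
    fun hi => mul_nonpos_of_nonpos_of_nonneg hi (hpos i hi).le
  intro i
  have hzero := (Finset.sum_eq_zero_iff_of_nonpos fun i _ => hterm i).1 hsum i (Finset.mem_univ i)
  refine (mul_eq_zero.1 hzero).resolve_right ?_
  exact (lt_or_ge 0 (c i)).elim (fun hi => (hneg i hi).ne) fun hi => (hpos i hi).ne'

theorem isIndependentAlong_sideFunctional {d m : ℕ} {P : Fin m → Set (EuclideanSpace ℝ (Fin d))}
    (hP : StronglySeparated P) {V : Fin m → Set (EuclideanSpace ℝ (Fin d))}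
    (hV : ∀ i, (V i).Finite) (hne : ∀ i, (V i).Nonempty) (hPV : ∀ i, P i = convexHull ℝ (V i)) :
    IsIndependentAlong ⊥ fun i => sideFunctional '' V i where
  finite i := (hV i).image _
  nonempty i := (hne i).image _
  eq_of_mem i f _ f' _ v hv := by rw [(Submodule.mem_bot ℝ).1 hv, map_zero, map_zero]
  linearIndependent p hp := by
    simp only [← AffineMap.image_convexHull, ← hPV] at hp
    choose x hx hxp using hp
    obtain rfl : (fun i => sideFunctional (x i)) = p := funext hxp
    refine linearIndependent_of_forall_exists_sign fun I => ?_
    obtain ⟨u, α, -, hlt, hgt⟩ := hP I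
    refine ⟨(u, α), fun i hi => ?_, fun i hi => ?_⟩
    · simpa [sideFunctional_apply] using hlt i hi _ (hx i)
    · simpa [sideFunctional_apply] using hgt i hi _ (hx i)

theorem isTangent_iff_lowerSupport_eq_zero {P V : Set W} (hV : V.Finite) (hne : V.Nonempty)
    (hPV : P = convexHull ℝ V) (p : W × ℝ) :
    (({x | ⟪p.1, x⟫_ℝ = p.2} ∩ P).Nonempty ∧ P ⊆ {x | p.2 ≤ ⟪p.1, x⟫_ℝ}) ↔
      lowerSupport (sideFunctional '' V) p = 0 := by
  obtain ⟨_, ⟨z, hz, rfl⟩, hzp⟩ :=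
    exists_mem_eq_lowerSupport (hV.image sideFunctional) (hne.image sideFunctional) p
  have hzP : z ∈ P := hPV ▸ subset_convexHull ℝ V hz
  have hle (x : W) (hx : x ∈ P) : lowerSupport (sideFunctional '' V) p ≤ ⟪p.1, x⟫_ℝ - p.2 := by
    rw [← sideFunctional_apply]
    refine lowerSupport_le_of_mem_convexHull (hV.image sideFunctional) ?_ p
    rw [← AffineMap.image_convexHull, ← hPV]
    exact Set.mem_image_of_mem _ hx
  rw [sideFunctional_apply] at hzp
  constructor
  · rintro ⟨⟨x, hxp, hxP⟩, hsub⟩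
    exact le_antisymm ((hle x hxP).trans_eq (sub_eq_zero.2 hxp))
      (hzp ▸ sub_nonneg.2 (hsub hzP))
  · intro h0
    exact ⟨⟨z, sub_eq_zero.1 (hzp.trans h0), hzP⟩, fun x hx => sub_nonneg.1 (h0 ▸ hle x hx)⟩

end Tangent
end CommonTangents

open CommonTangents

theorem common_tangents_to_polytopes_general {d m n : ℕ} (hm : 1 ≤ m) (hn : n + m = d + 1)
    (P : Fin m → Set (EuclideanSpace ℝ (Fin d)))
    (hpoly : ∀ i, ∃ V : Finset (EuclideanSpace ℝ (Fin d)), P i = convexHull ℝ (V : Set _))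
    (hne : ∀ i, (P i).Nonempty)
    (hsep : StronglySeparated P) :
    Nonempty (
      {p : EuclideanSpace ℝ (Fin d) × ℝ // ‖p.1‖ = 1 ∧ ∀ i : Fin m,
          ({x | ⟪p.1, x⟫_ℝ = p.2} ∩ P i).Nonempty ∧ P i ⊆ {x | p.2 ≤ ⟪p.1, x⟫_ℝ}}
        ≃ₜ Metric.sphere (0 : EuclideanSpace ℝ (Fin n)) 1) := by
  choose V hPV using hpoly
  have hVne (i : Fin m) : (V i : Set (EuclideanSpace ℝ (Fin d))).Nonempty :=
    convexHull_nonempty_iff.1 (hPV i ▸ hne i)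
  have htangent (i : Fin m) :=
    isTangent_iff_lowerSupport_eq_zero (V i).finite_toSet (hVne i) (hPV i)
  have hind := isIndependentAlong_sideFunctional hsep (fun i => (V i).finite_toSet) hVne hPV
  have htrivial := hind.isConicallyTrivial (G := EuclideanSpace ℝ (Fin n)) (by simp [hn])
  obtain ⟨e⟩ := htrivial.nonempty_homeomorph_sphere (M := fun p => ‖p.1‖) (by fun_prop)
    (fun t ht p => by simp [norm_smul, abs_of_pos ht]) fun p hp hp0 => by
      refine norm_pos_iff.2 fun hp1 => hp0 (Prod.ext hp1 ?_)
      obtain ⟨⟨x, hx, -⟩, -⟩ := (htangent ⟨0, hm⟩ p).2 (congrFun hp _)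
      simpa [hp1, eq_comm] using hx
  exact ⟨((Homeomorph.refl (EuclideanSpace ℝ (Fin d) × ℝ)).subtype fun p => and_congr_right fun _ =>
    (forall_congr' fun i => htangent i p).trans funext_iff.symm).trans e⟩

/-- Main Theorem: for a strongly separated family of `m ≤ d` full-dimensional polytopes
in `ℝ^d`, the space of oriented tangent hyperplanes containing the family on their
nonnegative side is homeomorphic to the sphere `S^{d-m}`. -/
theorem common_tangents_to_polytopes {d m : ℕ} (hm : 1 ≤ m) (hmd : m ≤ d)
    (P : Fin m → Set (EuclideanSpace ℝ (Fin d)))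
    (hpoly : ∀ i, ∃ V : Finset (EuclideanSpace ℝ (Fin d)), P i = convexHull ℝ (V : Set _))
    (hfull : ∀ i, (interior (P i)).Nonempty)
    (hsep : StronglySeparated P) :
    Nonempty (
      {p : EuclideanSpace ℝ (Fin d) × ℝ // ‖p.1‖ = 1 ∧ ∀ i : Fin m,
          ({x | ⟪p.1, x⟫_ℝ = p.2} ∩ P i).Nonempty ∧ P i ⊆ {x | p.2 ≤ ⟪p.1, x⟫_ℝ}}
        ≃ₜ Metric.sphere (0 : EuclideanSpace ℝ (Fin (d - m + 1))) 1) :=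
  common_tangents_to_polytopes_general hm (by omega) P hpoly
    (fun i => (hfull i).mono interior_subset) hsep
end

section
/- (Bisztriczky's theorem, per partition.) Let K₁,…,K_d be a strongly separated family of convex bodies in ℝ^d and let A ⊔ B = {1,…,d} be a partition. Then there exist exactly two pairs (u,α) with u ∈ ℝ^d, ‖u‖ = 1, α ∈ ℝ such that the hyperplane H_{u,α} = {x : ⟨u,x⟩ = α} is tangent to every Kᵢ (i.e., H_{u,α} ∩ Kᵢ ≠ ∅ for every i), K_a ⊆ {x : ⟨u,x⟩ ≥ α} for every a ∈ A, and K_b ⊆ {x : ⟨u,x⟩ ≤ α} for every b ∈ B. -/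
open scoped InnerProductSpace

/-!
Lift `x` to `(x, -1)` and identify the oriented hyperplane `{x | ⟪u, x⟫ = α}` with `(u, α)`. Then
`⟪u, x⟫ - α` becomes an inner product, and after multiplying the lifted bodies by signs according
to the partition, the hyperplanes to be counted are the inner normals `v` of hyperplanes through
the origin that support every body of a family `L`. By Radon's theorem, strong separation makes
every transversal of the original family affinely independent, hence every transversal `Y` of `L`
linearly independent.

A nonzero vector `v` orthogonal to a transversal `Y` has `det (v, Y) ≠ 0`, and the sign does not
depend on `Y` since the transversals orthogonal to `v` form a convex set. So these vectors split
into two opposite closed cones `N` and `-N`, and there is exactly one solution, up to scaling, in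
each of them. Uniqueness: if `v` and `w` are solutions in `N`, then each `(1 - t) • v - t • w` is
orthogonal to a transversal; the path runs from `N` to `-N`, so it passes through `0`.
Existence: replace points by bodies one at a time. If for each `y ∈ L j` there is a unit solution
`v y ∈ N` for the family in which `L j` is replaced by `{y}`, then `0 ≤ ⟪z, v y⟫` is a closed total
preorder on `L j`, and an extremal `y` gives a `v y` that supports `L j` as well.
-/

open Set Module

section Topology

variable {X Y : Type*} [TopologicalSpace X] [TopologicalSpace Y]

theorem isClosed_setOf_exists_mem_of_isCompact {S : Set Y} (hS : IsCompact S) {C : Set (X × Y)}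
    (hC : IsClosed C) : IsClosed {x | ∃ y ∈ S, (x, y) ∈ C} := by
  have : CompactSpace S := isCompact_iff_compactSpace.1 hS
  have hpre : IsClosed {p : X × S | (p.1, (p.2 : Y)) ∈ C} := hC.preimage (by fun_prop)
  convert isClosedMap_fst_of_compactSpace _ hpre using 1
  ext x
  simp [and_comm]

theorem continuousOn_of_isClosed_graph {S : Set Y} (hS : IsCompact S) {C : Set (X × Y)}
    (hC : IsClosed C) {K : Set X} {f : X → Y} (hfS : ∀ x ∈ K, f x ∈ S)
    (hf : ∀ x ∈ K, ∀ y ∈ S, (x, y) ∈ C ↔ y = f x) : ContinuousOn f K := by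
  refine continuousOn_iff_isClosed.2 fun t ht ↦ ⟨{x | ∃ y ∈ S, (x, y) ∈ C ∩ Prod.snd ⁻¹' t},
    isClosed_setOf_exists_mem_of_isCompact hS (hC.inter (ht.preimage continuous_snd)), ?_⟩
  ext x
  refine and_congr_left fun hx ↦ ⟨fun hxt ↦ ⟨f x, hfS x hx, (hf x hx _ (hfS x hx)).2 rfl, hxt⟩, ?_⟩
  rintro ⟨y, hyS, hyC, hyt⟩
  rwa [mem_preimage, ← (hf x hx y hyS).1 hyC]

end Topology

section NormalSelection

variable {V : Type*} [NormedAddCommGroup V] [InnerProductSpace ℝ V] {K : Set V} {v : V → V}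

theorem inner_lineMap_left (y z w : V) (t : ℝ) :
    ⟪AffineMap.lineMap y z t, w⟫_ℝ = (1 - t) * ⟪y, w⟫_ℝ + t * ⟪z, w⟫_ℝ := by
  rw [AffineMap.lineMap_apply_module, inner_add_left, real_inner_smul_left, real_inner_smul_left]

theorem exists_mem_inner_eq_zero (hK : Convex ℝ K) {y z w : V} (hy : y ∈ K) (hz : z ∈ K)
    (hyw : ⟪y, w⟫_ℝ ≤ 0) (hzw : 0 ≤ ⟪z, w⟫_ℝ) : ∃ x ∈ K, ⟪x, w⟫_ℝ = 0 :=
  hK.isPreconnected.intermediate_value hy hz (f := fun x ↦ ⟪x, w⟫_ℝ) (by fun_prop) ⟨hyw, hzw⟩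

/-- A continuous choice, for each `y ∈ K`, of a normal `v y` to a hyperplane through the origin and
`y`, such that the selected normals at two points of `K` agree as soon as one of these two
hyperplanes contains both points. It models the normals of hyperplanes that pass through `y` and
touch some further fixed bodies. -/
structure IsNormalSelection (K : Set V) (v : V → V) : Prop where
  continuousOn : ContinuousOn v K
  inner_self : ∀ y ∈ K, ⟪y, v y⟫_ℝ = 0
  eq_of_inner_eq_zero : ∀ y ∈ K, ∀ z ∈ K, ⟪z, v y⟫_ℝ = 0 → v z = v y

namespace IsNormalSelection

theorem inner_lineMap_ne_zero (hv : IsNormalSelection K v) (hK : Convex ℝ K) {y z : V}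
    (hy : y ∈ K) (hz : z ∈ K) (hne : v y ≠ v z) {t : ℝ} (ht : t ∈ Ico (0 : ℝ) 1) :
    ⟪z, v (AffineMap.lineMap y z t)⟫_ℝ ≠ 0 := by
  intro h
  set x := AffineMap.lineMap y z t with hx
  have hxK : x ∈ K := hK.lineMap_mem hy hz ⟨ht.1, ht.2.le⟩
  have hsum : (1 - t) * ⟪y, v x⟫_ℝ + t * ⟪z, v x⟫_ℝ = 0 := by
    rw [← inner_lineMap_left, ← hx, hv.inner_self x hxK]
  rw [h, mul_zero, add_zero] at hsum
  have hyx : ⟪y, v x⟫_ℝ = 0 := (mul_eq_zero.1 hsum).resolve_left (sub_pos.2 ht.2).ne'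
  exact hne ((hv.eq_of_inner_eq_zero x hxK y hy hyx).trans
    (hv.eq_of_inner_eq_zero x hxK z hz h).symm)

theorem mul_inner_lineMap_pos (hv : IsNormalSelection K v) (hK : Convex ℝ K) {y z : V}
    (hy : y ∈ K) (hz : z ∈ K) (hne : v y ≠ v z) {t : ℝ} (ht : t ∈ Ico (0 : ℝ) 1) :
    0 < ⟪z, v y⟫_ℝ * ⟪z, v (AffineMap.lineMap y z t)⟫_ℝ := by
  let f : ℝ → ℝ := fun s ↦ ⟪z, v (AffineMap.lineMap y z s)⟫_ℝ
  have hf : ContinuousOn f (Ico 0 1) := continuousOn_const.inner <|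
    hv.continuousOn.comp AffineMap.lineMap_continuous.continuousOn
      fun s hs ↦ hK.lineMap_mem hy hz ⟨hs.1, hs.2.le⟩
  have hf0 : f 0 = ⟪z, v y⟫_ℝ := by simp [f]
  by_contra! hle
  rw [← hf0] at hle
  have hmem : (0 : ℝ) ∈ uIcc (f 0) (f t) := by
    rcases mul_nonpos_iff.1 hle with ⟨h, h'⟩ | ⟨h, h'⟩
    exacts [mem_uIcc_of_ge h' h, mem_uIcc_of_le h h']
  obtain ⟨s, hs, hs0⟩ := (isPreconnected_Ico.image f hf).ordConnected.uIcc_subset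
    (mem_image_of_mem f (left_mem_Ico.2 one_pos)) (mem_image_of_mem f ht) hmem
  exact hv.inner_lineMap_ne_zero hK hy hz hne hs hs0

theorem inner_nonneg_total (hv : IsNormalSelection K v) (hK : Convex ℝ K) {y z : V}
    (hy : y ∈ K) (hz : z ∈ K) : 0 ≤ ⟪z, v y⟫_ℝ ∨ 0 ≤ ⟪y, v z⟫_ℝ := by
  rcases eq_or_ne (v y) (v z) with h | hne
  · exact Or.inl (h ▸ (hv.inner_self z hz).ge)
  set m := AffineMap.lineMap y z (1 / 2 : ℝ) with hm
  have hsum : ⟪y, v m⟫_ℝ + ⟪z, v m⟫_ℝ = 0 := by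
    have := inner_lineMap_left y z (v m) (1 / 2)
    rw [← hm, hv.inner_self m (hK.lineMap_mem hy hz (by norm_num))] at this
    linarith
  have hm' : m = AffineMap.lineMap z y (1 / 2 : ℝ) := by
    rw [hm, ← AffineMap.lineMap_apply_one_sub]; norm_num
  have hzm := hv.mul_inner_lineMap_pos hK hy hz hne (t := 1 / 2) (by norm_num)
  have hym := hv.mul_inner_lineMap_pos hK hz hy hne.symm (t := 1 / 2) (by norm_num)
  rw [← hm] at hzm
  rw [← hm', eq_neg_of_add_eq_zero_left hsum] at hym
  by_contra! hneg
  linarith [neg_of_mul_pos_right hzm hneg.1.le, neg_of_mul_pos_right hym hneg.2.le]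

theorem inner_nonneg_trans (hv : IsNormalSelection K v) (hK : Convex ℝ K) {x y z : V}
    (hx : x ∈ K) (hy : y ∈ K) (hz : z ∈ K) (hyx : 0 ≤ ⟪y, v x⟫_ℝ) (hzy : 0 ≤ ⟪z, v y⟫_ℝ) :
    0 ≤ ⟪z, v x⟫_ℝ := by
  by_contra! hzx
  obtain ⟨w, hw, hwx⟩ := exists_mem_inner_eq_zero (convex_segment y z)
    (right_mem_segment ℝ y z) (left_mem_segment ℝ y z) hzx.le hyx
  have hvw : v w = v x := hv.eq_of_inner_eq_zero x hx w (hK.segment_subset hy hz hw) hwx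
  rw [segment_eq_image_lineMap] at hw
  obtain ⟨t, ht, rfl⟩ := hw
  have ht1 : t ≠ 1 := by
    rintro rfl
    rw [AffineMap.lineMap_apply_one] at hwx
    exact hzx.ne hwx
  rcases eq_or_ne (v y) (v z) with h | hne
  · have hy0 : ⟪AffineMap.lineMap y z t, v z⟫_ℝ = 0 := by
      rw [inner_lineMap_left, hv.inner_self z hz, ← h, hv.inner_self y hy]
      simp
    have := hv.eq_of_inner_eq_zero z hz _ (hK.lineMap_mem hy hz ht) hy0
    rw [← hvw, this, hv.inner_self z hz] at hzx
    exact hzx.false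
  · have := hv.mul_inner_lineMap_pos hK hy hz hne ⟨ht.1, ht.2.lt_of_ne ht1⟩
    rw [hvw] at this
    exact this.not_ge (mul_nonpos_of_nonneg_of_nonpos hzy hzx.le)

theorem exists_forall_inner_nonneg (hv : IsNormalSelection K v) (hK : Convex ℝ K)
    (hcomp : IsCompact K) (hne : K.Nonempty) : ∃ y ∈ K, ∀ z ∈ K, 0 ≤ ⟪z, v y⟫_ℝ := by
  let lower : K → Set V := fun z ↦ {y ∈ K | 0 ≤ ⟪(z : V), v y⟫_ℝ}
  have hclosed (z : K) : IsClosed (lower z) :=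
    (continuousOn_const.inner hv.continuousOn).preimage_isClosed_of_isClosed
      hcomp.isClosed isClosed_Ici
  have hmono {y z : K} (h : 0 ≤ ⟪(z : V), v y⟫_ℝ) : lower y ⊆ lower z := fun x hx ↦
    ⟨hx.1, hv.inner_nonneg_trans hK hx.1 y.2 z.2 hx.2 h⟩
  have hdir : Directed (· ⊇ ·) lower := fun y z ↦ by
    rcases hv.inner_nonneg_total hK y.2 z.2 with h | h
    exacts [⟨y, subset_rfl, hmono h⟩, ⟨z, hmono h, subset_rfl⟩]
  have : Nonempty K := hne.to_subtype
  obtain ⟨y, hy⟩ := IsCompact.nonempty_iInter_of_directed_nonempty_isCompact_isClosed lower hdir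
    (fun z ↦ ⟨z, z.2, (hv.inner_self z z.2).ge⟩)
    (fun z ↦ hcomp.of_isClosed_subset (hclosed z) fun _ h ↦ h.1) hclosed
  rw [mem_iInter] at hy
  obtain ⟨z₀, hz₀⟩ := hne
  exact ⟨y, (hy ⟨z₀, hz₀⟩).1, fun z hz ↦ (hy ⟨z, hz⟩).2⟩

end IsNormalSelection

end NormalSelection

section Determinant

theorem alternatingMap_option_elim_smul {R M M' ι : Type*} [CommSemiring R] [AddCommMonoid M]
    [Module R M] [AddCommMonoid M'] [Module R M'] (f : M [⋀^Option ι]→ₗ[R] M') (c : R) (v : M)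
    (Y : ι → M) : f (fun o ↦ o.elim (c • v) Y) = c • f (fun o ↦ o.elim v Y) := by
  classical
  have hupdate (w : M) : (fun o : Option ι ↦ o.elim w Y) =
      Function.update (fun o ↦ o.elim v Y) none w := by
    ext o
    cases o <;> simp
  rw [hupdate (c • v), AlternatingMap.map_update_smul, ← hupdate v]

theorem continuous_basis_det {𝕜 E κ : Type*} [NontriviallyNormedField 𝕜] [CompleteSpace 𝕜]
    [AddCommGroup E] [Module 𝕜 E] [TopologicalSpace E] [IsTopologicalAddGroup E]
    [ContinuousSMul 𝕜 E] [T2Space E] [Fintype κ] [DecidableEq κ] (b : Basis κ 𝕜 E) :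
    Continuous fun Y : κ → E ↦ b.det Y := by
  have := Module.Finite.of_basis b
  simp only [Basis.det_apply]
  exact Continuous.matrix_det <| continuous_matrix fun i j ↦
    (b.coord i).continuous_of_finiteDimensional.comp (continuous_apply j)

end Determinant

section Orientation

open scoped Pointwise

variable {V ι : Type*} [NormedAddCommGroup V] [InnerProductSpace ℝ V] {L : ι → Set V} {N : Set V}

/-- `v` is an inner normal of a hyperplane through the origin that supports `L`. The case `v = 0` is
allowed, so that tangent normals form a closed cone. -/
def IsTangentNormal (L : Set V) (v : V) : Prop :=
  (∀ y ∈ L, 0 ≤ ⟪y, v⟫_ℝ) ∧ ∃ y ∈ L, ⟪y, v⟫_ℝ = 0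

theorem isTangentNormal_singleton {y v : V} : IsTangentNormal {y} v ↔ ⟪y, v⟫_ℝ = 0 := by
  simpa [IsTangentNormal] using fun h : ⟪y, v⟫_ℝ = 0 ↦ h.ge

theorem forall_isTangentNormal_update [DecidableEq ι] {j : ι} {M : Set V} {v : V} :
    (∀ i, IsTangentNormal (Function.update L j M i) v) ↔
      IsTangentNormal M v ∧ ∀ i ≠ j, IsTangentNormal (L i) v :=
  Function.forall_update_iff L fun _ M ↦ IsTangentNormal M v

theorem isClosed_setOf_isTangentNormal {L : Set V} (hL : IsCompact L) :
    IsClosed {v | IsTangentNormal L v} := by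
  have hnonneg : IsClosed {v : V | ∀ y ∈ L, 0 ≤ ⟪y, v⟫_ℝ} := by
    simp only [ofPred_forall]
    exact isClosed_biInter fun y _ ↦ isClosed_le continuous_const (by fun_prop)
  exact hnonneg.inter (isClosed_setOf_exists_mem_of_isCompact hL
    (C := {p : V × V | ⟪p.2, p.1⟫_ℝ = 0}) (isClosed_eq (by fun_prop) continuous_const))

theorem IsTangentNormal.smul {L : Set V} {v : V} (hv : IsTangentNormal L v) {c : ℝ}
    (hc : 0 ≤ c) : IsTangentNormal L (c • v) := by
  obtain ⟨hpos, y, hy, hyv⟩ := hv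
  refine ⟨fun z hz ↦ ?_, y, hy, ?_⟩ <;> rw [real_inner_smul_right]
  exacts [mul_nonneg hc (hpos z hz), by rw [hyv, mul_zero]]

/-- `N` is a closed cone that contains exactly one of `v` and `-v` for each nonzero vector `v`
orthogonal to a transversal of `L`. It separates the two solutions of the tangency problem. -/
structure IsNormalOrientation (L : ι → Set V) (N : Set V) : Prop where
  isClosed : IsClosed N
  smul_mem : ∀ c : ℝ, 0 ≤ c → ∀ v ∈ N, c • v ∈ N
  mem_or_neg_mem : ∀ Y : ι → V, (∀ i, Y i ∈ L i) → ∀ v, (∀ i, ⟪Y i, v⟫_ℝ = 0) → v ∈ N ∨ -v ∈ N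
  eq_zero : ∀ v ∈ N, -v ∈ N → v = 0

namespace IsNormalOrientation

theorem neg (hN : IsNormalOrientation L N) : IsNormalOrientation L (-N) where
  isClosed := hN.isClosed.neg
  smul_mem c hc v hv := by simpa using hN.smul_mem c hc _ hv
  mem_or_neg_mem Y hY v hv := by simpa [or_comm] using hN.mem_or_neg_mem Y hY v hv
  eq_zero v hv hv' := hN.eq_zero v (by simpa using hv') hv

theorem mono {M : ι → Set V} (hN : IsNormalOrientation L N) (hM : ∀ i, M i ⊆ L i) :
    IsNormalOrientation M N :=
  { hN with mem_or_neg_mem := fun Y hY ↦ hN.mem_or_neg_mem Y fun i ↦ hM i (hY i) }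

theorem sameRay (hN : IsNormalOrientation L N) (hconv : ∀ i, Convex ℝ (L i)) {v w : V}
    (hv : v ∈ N) (hw : w ∈ N) (hLv : ∀ i, IsTangentNormal (L i) v)
    (hLw : ∀ i, IsTangentNormal (L i) w) : SameRay ℝ v w := by
  let f : ℝ → V := fun t ↦ (1 - t) • v - t • w
  have hf : Continuous f := by fun_prop
  have hcover : Icc (0 : ℝ) 1 ⊆ f ⁻¹' N ∪ f ⁻¹' (-N) := by
    intro t ht
    have hperp (i : ι) : ∃ y ∈ L i, ⟪y, f t⟫_ℝ = 0 := by
      obtain ⟨y, hy, hyv⟩ := (hLv i).2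
      obtain ⟨z, hz, hzw⟩ := (hLw i).2
      refine exists_mem_inner_eq_zero (hconv i) hy hz ?_ ?_
      · simpa [f, inner_sub_right, real_inner_smul_right, hyv] using
          mul_nonneg ht.1 ((hLw i).1 y hy)
      · simpa [f, inner_sub_right, real_inner_smul_right, hzw] using
          mul_nonneg (sub_nonneg.2 ht.2) ((hLv i).1 z hz)
    choose Y hY hYt using hperp
    exact hN.mem_or_neg_mem Y hY _ hYt
  obtain ⟨t, ht, htN, htN'⟩ := isPreconnected_closed_iff.1 isPreconnected_Icc _ _
    (hN.isClosed.preimage hf) (hN.neg.isClosed.preimage hf) hcover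
    ⟨0, by simp, by simpa [f] using hv⟩ ⟨1, by simp, by simpa [f] using hw⟩
  have ht0 : (1 - t) • v = t • w := sub_eq_zero.1 (hN.eq_zero _ htN htN')
  rcases ht.1.eq_or_lt with rfl | hpos
  · exact .inl (by simpa using ht0)
  rcases ht.2.eq_or_lt with rfl | hlt
  · exact .inr (.inl (by simpa using ht0.symm))
  exact .inr (.inr ⟨1 - t, t, sub_pos.2 hlt, hpos, ht0⟩)

end IsNormalOrientation

section OrientedNormals

variable [Fintype ι] [DecidableEq ι]

/-- The vectors `v` orthogonal to a transversal `Y` of `L` for which the system `(v, Y)` is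
nonnegatively oriented with respect to `b`; the index `none` carries `v`. -/
def orientedNormals (b : Basis (Option ι) ℝ V) (L : ι → Set V) : Set V :=
  {v | ∃ Y ∈ univ.pi L, (∀ i, ⟪Y i, v⟫_ℝ = 0) ∧ 0 ≤ b.det (fun o ↦ o.elim v Y)}

theorem det_elim_ne_zero (b : Basis (Option ι) ℝ V) {Y : ι → V} (hY : LinearIndependent ℝ Y)
    {v : V} (hv : v ≠ 0) (hYv : ∀ i, ⟪Y i, v⟫_ℝ = 0) : b.det (fun o ↦ o.elim v Y) ≠ 0 := by
  have := Module.Finite.of_basis b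
  have hspan : Submodule.span ℝ (range Y) ≤ (ℝ ∙ v)ᗮ := by
    rw [Submodule.span_le]
    rintro _ ⟨i, rfl⟩
    exact Submodule.mem_orthogonal_singleton_iff_inner_left.2 (hYv i)
  have hv' : v ∉ Submodule.span ℝ (range Y) := fun h ↦ hv <| inner_self_eq_zero.1 <|
    Submodule.mem_orthogonal_singleton_iff_inner_left.1 (hspan h)
  have hli : LinearIndependent ℝ (fun o : Option ι ↦ o.elim v Y) :=
    linearIndependent_option.2 ⟨hY, hv'⟩
  exact (b.is_basis_iff_det.1 ⟨hli, hli.span_eq_top_of_card_eq_finrank'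
    (finrank_eq_card_basis b).symm⟩).ne_zero

theorem isNormalOrientation_orientedNormals (b : Basis (Option ι) ℝ V)
    (hcomp : ∀ i, IsCompact (L i)) (hconv : ∀ i, Convex ℝ (L i))
    (hind : ∀ Y : ι → V, (∀ i, Y i ∈ L i) → LinearIndependent ℝ Y) :
    IsNormalOrientation L (orientedNormals b L) where
  isClosed := by
    have hperp : IsClosed {p : V × (ι → V) | ∀ i, ⟪p.2 i, p.1⟫_ℝ = 0} := by
      rw [ofPred_forall]
      exact isClosed_iInter fun i ↦ isClosed_eq (by fun_prop) continuous_const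
    have hdet : Continuous fun p : V × (ι → V) ↦ b.det (fun o ↦ o.elim p.1 p.2) :=
      (continuous_basis_det b).comp <| continuous_pi fun o ↦ by cases o <;> dsimp <;> fun_prop
    exact isClosed_setOf_exists_mem_of_isCompact (isCompact_univ_pi hcomp)
      (hperp.inter (isClosed_le continuous_const hdet))
  smul_mem := by
    rintro c hc v ⟨Y, hY, hYv, hdet⟩
    refine ⟨Y, hY, fun i ↦ by rw [real_inner_smul_right, hYv, mul_zero], ?_⟩
    rw [alternatingMap_option_elim_smul]
    exact mul_nonneg hc hdet
  mem_or_neg_mem Y hY v hYv := by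
    rcases le_total 0 (b.det fun o ↦ o.elim v Y) with h | h
    · exact .inl ⟨Y, fun i _ ↦ hY i, hYv, h⟩
    · refine .inr ⟨Y, fun i _ ↦ hY i, fun i ↦ by rw [inner_neg_right, hYv, neg_zero], ?_⟩
      rw [← neg_one_smul ℝ v, alternatingMap_option_elim_smul, neg_one_smul]
      linarith
  eq_zero := by
    rintro v ⟨Y, hY, hYv, hYdet⟩ ⟨Z, hZ, hZv, hZdet⟩
    by_contra hv
    have hconvex : Convex ℝ (univ.pi fun i ↦ L i ∩ {y | ⟪y, v⟫_ℝ = 0}) := convex_pi fun i _ ↦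
      (hconv i).inter (convex_hyperplane ((innerₗ V).flip v).isLinear 0)
    have hcont : Continuous fun Y : ι → V ↦ b.det (fun o ↦ o.elim v Y) :=
      (continuous_basis_det b).comp <| continuous_pi fun o ↦ by cases o <;> dsimp <;> fun_prop
    rw [← neg_one_smul ℝ v, alternatingMap_option_elim_smul, neg_one_smul] at hZdet
    obtain ⟨W, hW, hWdet⟩ := hconvex.isPreconnected.intermediate_value
      (fun i hi ↦ ⟨hZ i hi, by simpa using hZv i⟩) (fun i hi ↦ ⟨hY i hi, hYv i⟩)
      hcont.continuousOn ⟨show _ ≤ (0 : ℝ) by linarith, hYdet⟩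
    exact det_elim_ne_zero b (hind W fun i ↦ (hW i (mem_univ i)).1) hv
      (fun i ↦ (hW i (mem_univ i)).2) hWdet

end OrientedNormals

theorem exists_isNormalOrientation [Fintype ι] (hfr : finrank ℝ V = Fintype.card ι + 1)
    (hcomp : ∀ i, IsCompact (L i)) (hconv : ∀ i, Convex ℝ (L i))
    (hind : ∀ Y : ι → V, (∀ i, Y i ∈ L i) → LinearIndependent ℝ Y) :
    ∃ N, IsNormalOrientation L N := by
  classical
  have : FiniteDimensional ℝ V := .of_finrank_pos (by lia)
  exact ⟨_, isNormalOrientation_orientedNormals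
    ((finBasisOfFinrankEq ℝ V hfr).reindex (Fintype.equivOfCardEq (by simp))) hcomp hconv hind⟩

end Orientation

section Existence

variable {V ι : Type*} [NormedAddCommGroup V] [InnerProductSpace ℝ V] {L : ι → Set V} {N : Set V}

theorem eq_of_sameRay_of_seminorm_eq_one {M : Type*} [AddCommGroup M] [Module ℝ M]
    (p : Seminorm ℝ M) {v w : M} (h : SameRay ℝ v w) (hv : p v = 1)
    (hw : p w = 1) : v = w := by
  obtain ⟨r, s, hr, hs, hrs⟩ := h.exists_pos (by rintro rfl; simp at hv)
    (by rintro rfl; simp at hw)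
  have : r = s := by
    simpa [map_smul_eq_mul, hv, hw, abs_of_pos hr, abs_of_pos hs] using congrArg p hrs
  subst this
  exact smul_right_injective M hr.ne' hrs

theorem exists_ne_zero_forall_inner_eq_zero [Fintype ι] (hcard : Fintype.card ι < finrank ℝ V)
    (Y : ι → V) : ∃ v ≠ 0, ∀ i, ⟪Y i, v⟫_ℝ = 0 := by
  have : FiniteDimensional ℝ V := .of_finrank_pos (by lia)
  have hker : LinearMap.ker (LinearMap.pi fun i ↦ innerₗ V (Y i)) ≠ ⊥ :=
    LinearMap.ker_ne_bot_of_finrank_lt (by simpa using hcard)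
  obtain ⟨v, hv, hv0⟩ := Submodule.exists_mem_ne_zero_of_ne_bot hker
  exact ⟨v, hv0, congrFun (LinearMap.mem_ker.1 hv)⟩

namespace IsNormalOrientation

theorem exists_norm_eq_one [Fintype ι] (hN : IsNormalOrientation L N)
    (hcard : Fintype.card ι < finrank ℝ V) {Y : ι → V} (hY : ∀ i, Y i ∈ L i) :
    ∃ v ∈ N, ‖v‖ = 1 ∧ ∀ i, ⟪Y i, v⟫_ℝ = 0 := by
  obtain ⟨v, hv, hYv⟩ := exists_ne_zero_forall_inner_eq_zero hcard Y
  wlog hvN : v ∈ N generalizing v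
  · exact this (-v) (neg_ne_zero.2 hv) (by simpa using hYv)
      ((hN.mem_or_neg_mem Y hY v hYv).resolve_left hvN)
  refine ⟨‖v‖⁻¹ • v, hN.smul_mem _ (by positivity) v hvN, norm_smul_inv_norm hv, fun i ↦ ?_⟩
  rw [real_inner_smul_right, hYv, mul_zero]

theorem eq_of_isTangentNormal (hN : IsNormalOrientation L N) (hconv : ∀ i, Convex ℝ (L i))
    (p : Seminorm ℝ V) {v w : V} (hvN : v ∈ N) (hwN : w ∈ N) (hv : p v = 1) (hw : p w = 1)
    (hLv : ∀ i, IsTangentNormal (L i) v) (hLw : ∀ i, IsTangentNormal (L i) w) : v = w :=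
  eq_of_sameRay_of_seminorm_eq_one p (hN.sameRay hconv hvN hwN hLv hLw) hv hw

variable {j : ι}

theorem eq_of_inner_eq_zero (hN : IsNormalOrientation L N) (hconv : ∀ i, Convex ℝ (L i))
    {y v w : V} (hy : y ∈ L j) (hvN : v ∈ N) (hwN : w ∈ N) (hv : ‖v‖ = 1) (hw : ‖w‖ = 1)
    (hyv : ⟪y, v⟫_ℝ = 0) (hyw : ⟪y, w⟫_ℝ = 0) (hLv : ∀ i ≠ j, IsTangentNormal (L i) v)
    (hLw : ∀ i ≠ j, IsTangentNormal (L i) w) : v = w := by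
  classical
  refine (hN.mono (M := Function.update L j {y}) fun i ↦ ?_).eq_of_isTangentNormal (fun i ↦ ?_)
    (normSeminorm ℝ V) hvN hwN hv hw
    (forall_isTangentNormal_update.2 ⟨isTangentNormal_singleton.2 hyv, hLv⟩)
    (forall_isTangentNormal_update.2 ⟨isTangentNormal_singleton.2 hyw, hLw⟩) <;>
  rcases eq_or_ne i j with rfl | hij <;> simp [*]

theorem isNormalSelection (hN : IsNormalOrientation L N) [FiniteDimensional ℝ V]
    (hcomp : ∀ i, IsCompact (L i)) (hconv : ∀ i, Convex ℝ (L i)) {v : V → V}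
    (hvN : ∀ y ∈ L j, v y ∈ N) (hv : ∀ y ∈ L j, ‖v y‖ = 1) (hyv : ∀ y ∈ L j, ⟪y, v y⟫_ℝ = 0)
    (hLv : ∀ y ∈ L j, ∀ i ≠ j, IsTangentNormal (L i) (v y)) : IsNormalSelection (L j) v where
  continuousOn := by
    have hL : IsClosed {w | ∀ i ≠ j, IsTangentNormal (L i) w} := by
      simp only [ofPred_forall]
      exact isClosed_biInter fun i _ ↦ isClosed_setOf_isTangentNormal (hcomp i)
    have hperp : IsClosed {q : V × V | ⟪q.1, q.2⟫_ℝ = 0} :=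
      isClosed_eq (by fun_prop) continuous_const
    refine continuousOn_of_isClosed_graph (isCompact_sphere (0 : V) 1)
      (hperp.inter ((hN.isClosed.inter hL).preimage continuous_snd)) (by simpa using hv)
      fun y hy w hw ↦ ⟨fun ⟨hyw, hwN, hLw⟩ ↦ ?_, ?_⟩
    · exact hN.eq_of_inner_eq_zero hconv hy hwN (hvN y hy) (by simpa using hw) (hv y hy) hyw
        (hyv y hy) hLw (hLv y hy)
    · rintro rfl
      exact ⟨hyv y hy, hvN y hy, hLv y hy⟩
  inner_self := hyv
  eq_of_inner_eq_zero y hy z hz hzy := hN.eq_of_inner_eq_zero hconv hz (hvN z hz) (hvN y hy)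
    (hv z hz) (hv y hy) (hyv z hz) hzy (hLv z hz) (hLv y hy)

variable [Fintype ι]

theorem exists_isTangentNormal_of_subsingleton (hcard : Fintype.card ι < finrank ℝ V)
    (J : Finset ι) {L : ι → Set V} (hN : IsNormalOrientation L N) (hcomp : ∀ i, IsCompact (L i))
    (hconv : ∀ i, Convex ℝ (L i)) (hne : ∀ i, (L i).Nonempty) (hJ : ∀ i ∉ J, (L i).Subsingleton) :
    ∃ v ∈ N, ‖v‖ = 1 ∧ ∀ i, IsTangentNormal (L i) v := by
  classical
  have : FiniteDimensional ℝ V := .of_finrank_pos (by lia)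
  induction J using Finset.induction_on generalizing L with
  | empty =>
    choose c hc using hne
    have hL (i : ι) : L i = {c i} := (hJ i (by simp)).eq_singleton_of_mem (hc i)
    obtain ⟨v, hvN, hv, hcv⟩ := hN.exists_norm_eq_one hcard hc
    exact ⟨v, hvN, hv, fun i ↦ by rw [hL, isTangentNormal_singleton, hcv]⟩
  | insert j J _ ih =>
    have hpin (y : V) (hy : y ∈ L j) : ∃ v ∈ N, ‖v‖ = 1 ∧ ⟪y, v⟫_ℝ = 0 ∧
        ∀ i ≠ j, IsTangentNormal (L i) v := by
      simp only [← isTangentNormal_singleton, ← forall_isTangentNormal_update]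
      refine ih (hN.mono fun i ↦ ?_) (fun i ↦ ?_) (fun i ↦ ?_) (fun i ↦ ?_) fun i hi ↦ ?_ <;>
        rcases eq_or_ne i j with rfl | hij <;> simp [*]
    choose! v hvN hv hyv hLv using hpin
    obtain ⟨y, hy, hpos⟩ := (hN.isNormalSelection hcomp hconv hvN hv hyv hLv)
      |>.exists_forall_inner_nonneg (hconv j) (hcomp j) (hne j)
    refine ⟨v y, hvN y hy, hv y hy, fun i ↦ ?_⟩
    rcases eq_or_ne i j with rfl | hij
    exacts [⟨hpos, y, hy, hyv y hy⟩, hLv y hy i hij]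

theorem existsUnique_isTangentNormal (hN : IsNormalOrientation L N)
    (hcard : Fintype.card ι < finrank ℝ V) (hcomp : ∀ i, IsCompact (L i))
    (hconv : ∀ i, Convex ℝ (L i)) (hne : ∀ i, (L i).Nonempty) (p : Seminorm ℝ V)
    (hp : ∀ v, (∀ i, IsTangentNormal (L i) v) → p v = 0 → v = 0) :
    ∃! v, v ∈ N ∧ p v = 1 ∧ ∀ i, IsTangentNormal (L i) v := by
  refine existsUnique_of_exists_of_unique ?_ fun v w ⟨hvN, hv, hLv⟩ ⟨hwN, hw, hLw⟩ ↦
    hN.eq_of_isTangentNormal hconv p hvN hwN hv hw hLv hLw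
  obtain ⟨v, hvN, hv, hLv⟩ := hN.exists_isTangentNormal_of_subsingleton hcard Finset.univ hcomp
    hconv hne (by simp)
  have hpv : p v ≠ 0 := fun h ↦ by simp [hp v hLv h] at hv
  refine ⟨(p v)⁻¹ • v, hN.smul_mem _ (by positivity) v hvN, ?_, fun i ↦ (hLv i).smul
    (by positivity)⟩
  rw [map_smul_eq_mul, norm_inv, Real.norm_of_nonneg (apply_nonneg p v), inv_mul_cancel₀ hpv]

end IsNormalOrientation

theorem encard_setOf_isTangentNormal [Fintype ι] (hcard : finrank ℝ V = Fintype.card ι + 1)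
    (hcomp : ∀ i, IsCompact (L i)) (hconv : ∀ i, Convex ℝ (L i)) (hne : ∀ i, (L i).Nonempty)
    (hind : ∀ Y : ι → V, (∀ i, Y i ∈ L i) → LinearIndependent ℝ Y) (p : Seminorm ℝ V)
    (hp : ∀ v, (∀ i, IsTangentNormal (L i) v) → p v = 0 → v = 0) :
    {v | p v = 1 ∧ ∀ i, IsTangentNormal (L i) v}.encard = 2 := by
  obtain ⟨N, hN⟩ := exists_isNormalOrientation hcard hcomp hconv hind
  obtain ⟨v, ⟨hvN, hv⟩, hv_uniq⟩ :=
    hN.existsUnique_isTangentNormal (by lia) hcomp hconv hne p hp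
  obtain ⟨w, ⟨hwN, hw⟩, hw_uniq⟩ :=
    hN.neg.existsUnique_isTangentNormal (by lia) hcomp hconv hne p hp
  refine encard_eq_two.2 ⟨v, w, ?_, subset_antisymm (fun x hx ↦ ?_) (pair_subset hv hw)⟩
  · rintro rfl
    have hv0 : v = 0 := hN.eq_zero v hvN hwN
    simp [hv0] at hv
  · choose Y hY hYx using fun i ↦ (hx.2 i).2
    exact (hN.mem_or_neg_mem Y hY x hYx).imp (fun h ↦ hv_uniq x ⟨h, hx⟩) fun h ↦ hw_uniq x ⟨h, hx⟩

end Existence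

section StronglySeparated

theorem StronglySeparated.affineIndependent {d m : ℕ}
    {S : Fin m → Set (EuclideanSpace ℝ (Fin d))} (hS : StronglySeparated S)
    {x : Fin m → EuclideanSpace ℝ (Fin d)} (hx : ∀ i, x i ∈ S i) : AffineIndependent ℝ x := by
  by_contra hdep
  obtain ⟨I, z, hzI, hzI'⟩ := Convex.radon_partition hdep
  classical
  obtain ⟨u, α, -, hlt, hgt⟩ := hS I.toFinset
  have hlin : IsLinearMap ℝ fun y ↦ ⟪u, y⟫_ℝ := (innerₗ _ u).isLinear
  have hI : x '' I ⊆ {y | ⟪u, y⟫_ℝ < α} :=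
    image_subset_iff.2 fun i hi ↦ hlt i (mem_toFinset.2 hi) _ (hx i)
  have hI' : x '' Iᶜ ⊆ {y | α < ⟪u, y⟫_ℝ} :=
    image_subset_iff.2 fun i hi ↦ hgt i (mt mem_toFinset.1 hi) _ (hx i)
  exact lt_asymm (mem_ofPred_eq ▸ convexHull_min hI (convex_halfSpace_lt hlin α) hzI)
    (convexHull_min hI' (convex_halfSpace_gt hlin α) hzI')

theorem StronglySeparated.pos_dim {d m : ℕ}
    {S : Fin m → Set (EuclideanSpace ℝ (Fin d))} (hS : StronglySeparated S) : 0 < d := by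
  obtain ⟨u, _, hu, -⟩ := hS ∅
  by_contra! hd
  obtain rfl : d = 0 := by lia
  exact hu (Subsingleton.elim u 0)

end StronglySeparated

section Homogenization

theorem linearIndependent_prodMk_neg_one {k V ι : Type*} [Ring k] [AddCommGroup V] [Module k V]
    {x : ι → V} (hx : AffineIndependent k x) : LinearIndependent k fun i ↦ (x i, (-1 : k)) := by
  refine linearIndependent_iff'.2 fun s w hw ↦ affineIndependent_iff.1 hx s w ?_ ?_
  · simpa using congrArg (LinearMap.snd k V k) hw
  · simpa using congrArg (LinearMap.fst k V k) hw

open scoped Pointwise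

variable {E ι : Type*} [NormedAddCommGroup E] {K : Set E}

/-- The lift of `K` to height `-1` in `E × ℝ`, the sign being chosen so that
`⟪(x, -1), (u, α)⟫ = ⟪u, x⟫ - α`. -/
def homogenization (K : Set E) : Set (WithLp 2 (E × ℝ)) := (fun x ↦ WithLp.toLp 2 (x, -1)) '' K

theorem isCompact_homogenization (hK : IsCompact K) : IsCompact (homogenization K) :=
  hK.image (by fun_prop)

variable [InnerProductSpace ℝ E]

theorem convex_homogenization (hK : Convex ℝ K) : Convex ℝ (homogenization K) := by
  simpa [homogenization, prod_singleton, image_image] using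
    (hK.prod (convex_singleton (-1 : ℝ))).linear_image
      (WithLp.linearEquiv 2 ℝ (E × ℝ)).symm.toLinearMap

theorem isTangentNormal_smul_homogenization {σ : ℝ} (hσ : σ ≠ 0) {u : E} {α : ℝ} :
    IsTangentNormal (σ • homogenization K) (WithLp.toLp 2 (u, α)) ↔
      (∀ x ∈ K, 0 ≤ σ * (⟪u, x⟫_ℝ - α)) ∧ ∃ x ∈ K, ⟪u, x⟫_ℝ = α := by
  have hinner (x : E) : ⟪σ • WithLp.toLp 2 (x, (-1 : ℝ)), WithLp.toLp 2 (u, α)⟫_ℝ =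
      σ * (⟪u, x⟫_ℝ - α) := by
    rw [real_inner_smul_left, WithLp.prod_inner_apply]
    simp [real_inner_comm, sub_eq_add_neg]
  simp only [IsTangentNormal, homogenization, ← image_smul, image_image, forall_mem_image,
    exists_mem_image, hinner, mul_eq_zero, hσ, false_or, sub_eq_zero]

theorem eq_zero_of_isTangentNormal_smul_homogenization {σ : ℝ} (hσ : σ ≠ 0)
    {v : WithLp 2 (E × ℝ)} (hv : IsTangentNormal (σ • homogenization K) v) (hv0 : v.fst = 0) :
    v = 0 := by
  obtain ⟨u, α⟩ := v
  obtain rfl : u = 0 := hv0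
  obtain ⟨x, -, hx⟩ := ((isTangentNormal_smul_homogenization hσ).1 hv).2
  obtain rfl : 0 = α := by simpa using hx
  rfl

theorem forall_isTangentNormal_smul_homogenization [Fintype ι] {K : ι → Set E} {σ : ι → ℝ}
    {A B : Finset ι} (hAB : Codisjoint A B) (hA : ∀ i ∈ A, 0 < σ i) (hB : ∀ i ∈ B, σ i < 0)
    {u : E} {α : ℝ} :
    (∀ i, IsTangentNormal (σ i • homogenization (K i)) (WithLp.toLp 2 (u, α))) ↔
      (∀ i, ({x | ⟪u, x⟫_ℝ = α} ∩ K i).Nonempty) ∧ (∀ a ∈ A, K a ⊆ {x | α ≤ ⟪u, x⟫_ℝ}) ∧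
        ∀ b ∈ B, K b ⊆ {x | ⟪u, x⟫_ℝ ≤ α} := by
  have hcover (i : ι) : i ∈ A ∨ i ∈ B :=
    or_iff_not_imp_left.2 fun hi ↦ Finset.codisjoint_left.1 hAB hi
  have hσ (i : ι) : σ i ≠ 0 := (hcover i).elim (fun h ↦ (hA i h).ne') fun h ↦ (hB i h).ne
  simp only [isTangentNormal_smul_homogenization (hσ _), forall_and]
  rw [and_comm]
  refine and_congr (forall_congr' fun i ↦ exists_congr fun x ↦ and_comm)
    ⟨fun h ↦ ⟨fun a ha x hx ↦ ?_, fun b hb x hx ↦ ?_⟩, fun ⟨h, h'⟩ i x hx ↦ ?_⟩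
  · exact sub_nonneg.1 (nonneg_of_mul_nonneg_right (h a x hx) (hA a ha))
  · exact sub_nonpos.1 (nonpos_of_mul_nonneg_right (h b x hx) (hB b hb))
  · rcases hcover i with hi | hi
    · exact mul_nonneg (hA i hi).le (sub_nonneg.2 (h i hi hx))
    · exact mul_nonneg_of_nonpos_of_nonpos (hB i hi).le (sub_nonpos.2 (h' i hi hx))

theorem linearIndependent_of_mem_smul_homogenization {K : ι → Set E} {σ : ι → ℝ}
    (hσ : ∀ i, σ i ≠ 0) (hind : ∀ x : ι → E, (∀ i, x i ∈ K i) → AffineIndependent ℝ x)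
    {Y : ι → WithLp 2 (E × ℝ)} (hY : ∀ i, Y i ∈ σ i • homogenization (K i)) :
    LinearIndependent ℝ Y := by
  have hlift (i : ι) : ∃ x ∈ K i, σ i • WithLp.toLp 2 (x, (-1 : ℝ)) = Y i := by
    simpa [homogenization, mem_smul_set] using hY i
  choose x hx hxY using hlift
  rw [show Y = (fun i ↦ Units.mk0 (σ i) (hσ i)) • fun i ↦ WithLp.toLp 2 (x i, (-1 : ℝ)) from
    funext fun i ↦ (hxY i).symm]
  exact ((linearIndependent_prodMk_neg_one (hind x hx)).map'
    (WithLp.linearEquiv 2 ℝ (E × ℝ)).symm.toLinearMap (LinearEquiv.ker _)).units_smul _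

theorem bisztriczky_per_partition_general {E ι : Type*} [NormedAddCommGroup E]
    [InnerProductSpace ℝ E] [Fintype ι] [Nonempty ι] (hcard : Fintype.card ι = finrank ℝ E)
    (K : ι → Set E) (hcomp : ∀ i, IsCompact (K i)) (hconv : ∀ i, Convex ℝ (K i))
    (hne : ∀ i, (K i).Nonempty)
    (hind : ∀ x : ι → E, (∀ i, x i ∈ K i) → AffineIndependent ℝ x)
    (A B : Finset ι) (hAB : IsCompl A B) :
    {p : E × ℝ | ‖p.1‖ = 1 ∧
        (∀ i, ({x | ⟪p.1, x⟫_ℝ = p.2} ∩ K i).Nonempty) ∧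
        (∀ a ∈ A, K a ⊆ {x | p.2 ≤ ⟪p.1, x⟫_ℝ}) ∧
        (∀ b ∈ B, K b ⊆ {x | ⟪p.1, x⟫_ℝ ≤ p.2})}.encard = 2 := by
  classical
  have : FiniteDimensional ℝ E := .of_finrank_pos (hcard ▸ Fintype.card_pos)
  let σ : ι → ℝ := fun i ↦ if i ∈ A then 1 else -1
  let L : ι → Set (WithLp 2 (E × ℝ)) := fun i ↦ σ i • homogenization (K i)
  let p : Seminorm ℝ (WithLp 2 (E × ℝ)) := (normSeminorm ℝ E).comp (WithLp.fstₗ 2 ℝ E ℝ)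
  have hσ (i : ι) : σ i ≠ 0 := by
    by_cases hi : i ∈ A <;> simp [σ, hi]
  have hcount : {v | p v = 1 ∧ ∀ i, IsTangentNormal (L i) v}.encard = 2 := by
    refine encard_setOf_isTangentNormal ?_
      (fun i ↦ (isCompact_homogenization (hcomp i)).smul _)
      (fun i ↦ (convex_homogenization (hconv i)).smul _) (fun i ↦ ((hne i).image _).smul_set)
      (fun Y ↦ linearIndependent_of_mem_smul_homogenization hσ hind) p fun v hv hpv ↦ ?_
    · rw [(WithLp.linearEquiv 2 ℝ (E × ℝ)).finrank_eq, finrank_prod, finrank_self, hcard]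
    · exact eq_zero_of_isTangentNormal_smul_homogenization (hσ (Classical.arbitrary ι)) (hv _)
        (norm_eq_zero.1 hpv)
  rw [← encard_preimage_of_bijective (WithLp.toLp_bijective 2)] at hcount
  convert hcount using 2
  ext ⟨u, α⟩
  exact and_congr_right' (forall_isTangentNormal_smul_homogenization hAB.codisjoint
    (fun i hi ↦ by simp [σ, hi])
    (fun i hi ↦ by simp [σ, Finset.disjoint_right.1 hAB.disjoint hi])).symm

end Homogenization

/-- Bisztriczky's theorem, per partition: for a strongly separated family of `d` convex
bodies in `ℝ^d` and a partition `A ⊔ B = [d]`, there are exactly two oriented hyperplanes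
`(u, α)` tangent to every body, with the bodies of `A` on the nonnegative side and the
bodies of `B` on the nonpositive side. -/
theorem bisztriczky_per_partition {d : ℕ}
    (K : Fin d → Set (EuclideanSpace ℝ (Fin d)))
    (hcomp : ∀ i, IsCompact (K i)) (hconv : ∀ i, Convex ℝ (K i))
    (hint : ∀ i, (interior (K i)).Nonempty)
    (hsep : StronglySeparated K)
    (A B : Finset (Fin d)) (hdisj : Disjoint A B) (hunion : A ∪ B = Finset.univ) :
    {p : EuclideanSpace ℝ (Fin d) × ℝ | ‖p.1‖ = 1 ∧
        (∀ i : Fin d, ({x | ⟪p.1, x⟫_ℝ = p.2} ∩ K i).Nonempty) ∧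
        (∀ a ∈ A, K a ⊆ {x | p.2 ≤ ⟪p.1, x⟫_ℝ}) ∧
        (∀ b ∈ B, K b ⊆ {x | ⟪p.1, x⟫_ℝ ≤ p.2})}.encard = 2 := by
  have : Nonempty (Fin d) := ⟨⟨0, hsep.pos_dim⟩⟩
  exact bisztriczky_per_partition_general (by simp) K hcomp hconv
    (fun i ↦ (hint i).mono interior_subset) (fun _ ↦ hsep.affineIndependent) A B
    ⟨hdisj, codisjoint_iff.2 hunion⟩
end
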